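/- arXiv:1510.03464 — 8 statements merged into one kernel-verified Lean document; each statement's English description precedes it below -/
import Mathlib

section
/- Let X be a finite quasigroup rack, i.e. a finite rack in which for all a, b ∈ X the equation a*x = b has a unique solution x ∈ X. Then for every n ≥ 1, the torsion subgroup of the rack homology group H_n^R(X) is annihilated by |X|. -/
/-- The `n`-th rack chain group: the free abelian group on `n`-tuples of `X`. -/
abbrev RackChain (X : Type) (n : ℕ) : Type := FreeAbelianGroup (Fin n → X)

/-- The face map `d_i^{(*_0)}` deleting the `i`-th entry (0-indexed). -/
def dZero {X : Type} (n : ℕ) (i : Fin (n + 1)) (x : Fin (n + 1) → X) :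
    Fin n → X :=
  fun j => if (j : ℕ) < (i : ℕ) then x j.castSucc else x j.succ

/-- The face map `d_i^{(*)}`: entries before position `i` are acted on by `x i`
and the `i`-th entry is deleted (0-indexed). -/
def dStar {X : Type} (op : X → X → X) (n : ℕ) (i : Fin (n + 1))
    (x : Fin (n + 1) → X) : Fin n → X :=
  fun j => if (j : ℕ) < (i : ℕ) then op (x j.castSucc) (x i) else x j.succ

/-- The rack boundary `∂_{n+1} : C_{n+1}^R(X) → C_n^R(X)`,
`∂(x) = Σ_{i=1}^{n+1} (-1)^i (d_i^{(*_0)} x - d_i^{(*)} x)` (with `i` 1-based). -/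
def rackBoundary {X : Type} (op : X → X → X) (n : ℕ) :
    RackChain X (n + 1) →+ RackChain X n :=
  FreeAbelianGroup.lift fun x =>
    ∑ i : Fin (n + 1), ((-1 : ℤ) ^ ((i : ℕ) + 1)) •
      (FreeAbelianGroup.of (dZero n i x) - FreeAbelianGroup.of (dStar op n i x))

/-- The group of rack `(n+1)`-cycles. -/
def rackCycles {X : Type} (op : X → X → X) (n : ℕ) :
    AddSubgroup (RackChain X (n + 1)) :=
  (rackBoundary op n).ker

/-- The group of rack `(n+1)`-boundaries, viewed inside the cycles. -/
def rackBoundaries {X : Type} (op : X → X → X) (n : ℕ) :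
    AddSubgroup (rackCycles op n) :=
  ((rackBoundary op (n + 1)).range).addSubgroupOf (rackCycles op n)

/-- The `(n+1)`-st rack homology group `H_{n+1}^R(X)` (so `n = 0` gives `H_1`). -/
def rackHomology {X : Type} (op : X → X → X) (n : ℕ) : Type :=
  rackCycles (X := X) op n ⧸ rackBoundaries op n

instance {X : Type} (op : X → X → X) (n : ℕ) :
    AddCommGroup (rackHomology op n) :=
  QuotientAddGroup.Quotient.addCommGroup _

/-!
For `j ≥ 0`, let `S_j` send a tuple `x` to the chain `∑ y, (y, …, y, x_j, x_{j+1}, …)`, with `j`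
copies of `y` in front and entries numbered from `0`. Then `S_0` is multiplication by `|X|`, while
on `n`-tuples `S_n` factors through the sum of the coefficients. A torsion class is represented by a
cycle `c` whose coefficients sum to zero, because every boundary has this property, so it suffices
that `S_s c` and `S_{s+1} c` are homologous for each `s < n`.

Put `a = x_s` and insert an entry `y` at position `j ∈ {s, s + 1}` of `(a, …, a, x_{s+1}, …)`, the
tuple `x` with its first `s` entries replaced by `a`; then sum over `y`. Since `op` is idempotent,
the faces in front of `y` cancel. Deleting `y` itself yields `|X| • (a, …, a, x_{s+1}, …)` minus
`S_j x`, because `y ↦ op a y` is a bijection, and the remaining faces commute with the construction,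
because `y ↦ op y b` is a bijection. Hence both `S_s c` and `S_{s+1} c` are homologous to `|X|`
times the same chain.
-/

theorem op_self_of_rightDistrib {X : Type*} {op : X → X → X}
    (hsurj : ∀ b, Function.Surjective fun x => op x b)
    (hinj : ∀ a, Function.Injective (op a))
    (hdist : ∀ a b c, op (op a b) c = op (op a c) (op b c)) (b : X) : op b b = b := by
  obtain ⟨a, ha : op a b = b⟩ := hsurj b b
  have hb : op b b = op b (op b b) := by simpa only [ha] using hdist a b b
  exact (hinj b hb).symm

section Tuples

variable {X : Type} {n : ℕ}

/-- The tuple `(a, …, a, x_j, x_{j+1}, …)`: the first `j` entries of `x` are overwritten by `a`. -/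
def constPrefix (j : ℕ) (a : X) (x : Fin n → X) : Fin n → X :=
  fun i => if (i : ℕ) < j then a else x i

/-- The tuple `(a, …, a, y, x_j, x_{j+1}, …)`, obtained from `constPrefix j a x` by inserting `y` at
position `j`. The index `j` is a natural number so that the same `j` applies to `x` and to its
faces. -/
def constPrefixInsert (j : ℕ) (a y : X) (x : Fin n → X) : Fin (n + 1) → X :=
  fun i =>
    if (i : ℕ) < j then a else if h : j < (i : ℕ) then x ⟨(i : ℕ) - 1, by omega⟩ else y

theorem constPrefix_zero (a : X) (x : Fin n → X) : constPrefix 0 a x = x := by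
  funext i
  simp [constPrefix]

theorem constPrefix_length (a : X) (x : Fin n → X) : constPrefix n a x = fun _ => a := by
  funext i
  simp [constPrefix]

theorem constPrefix_succ_apply_self (s : Fin n) (x : Fin n → X) :
    constPrefix (s + 1) (x s) x = constPrefix s (x s) x := by
  funext i
  grind [constPrefix]

theorem dStar_constPrefixInsert_of_lt {op : X → X → X} (hid : ∀ a, op a a = a) {j : ℕ}
    {i : Fin (n + 1)} (hij : (i : ℕ) < j) (a y : X) (x : Fin n → X) :
    dStar op n i (constPrefixInsert j a y x) = dZero n i (constPrefixInsert j a y x) := by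
  funext m
  grind [dStar, dZero, constPrefixInsert]

theorem dZero_constPrefixInsert_self (j : Fin (n + 1)) (a y : X) (x : Fin n → X) :
    dZero n j (constPrefixInsert j a y x) = constPrefix j a x := by
  funext m
  grind [dZero, constPrefixInsert, constPrefix]

theorem dStar_constPrefixInsert_self (op : X → X → X) (j : Fin (n + 1)) (a y : X)
    (x : Fin n → X) :
    dStar op n j (constPrefixInsert j a y x) = constPrefix j (op a y) x := by
  funext m
  grind [dStar, constPrefixInsert, constPrefix]

theorem dZero_succ_constPrefixInsert {j : ℕ} {k : Fin (n + 1)} (hjk : j ≤ k) (a y : X)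
    (x : Fin (n + 1) → X) :
    dZero (n + 1) k.succ (constPrefixInsert j a y x) =
      constPrefixInsert j a y (dZero n k x) := by
  funext m
  grind [dZero, constPrefixInsert, Fin.castSucc_mk, Fin.succ_mk]

theorem dStar_succ_constPrefixInsert (op : X → X → X) {j : ℕ} {k : Fin (n + 1)} (hjk : j ≤ k)
    (a y : X) (x : Fin (n + 1) → X) :
    dStar op (n + 1) k.succ (constPrefixInsert j a y x) =
      constPrefixInsert j (op a (x k)) (op y (x k)) (dStar op n k x) := by
  funext m
  grind [dStar, constPrefixInsert, Fin.castSucc_mk, Fin.succ_mk]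

theorem constPrefixInsert_dStar_of_le (op : X → X → X) {j : ℕ} {k : Fin (n + 1)}
    (hkj : (k : ℕ) ≤ j) (a y : X) (x : Fin (n + 1) → X) :
    constPrefixInsert j a y (dStar op n k x) = constPrefixInsert j a y (dZero n k x) := by
  funext m
  grind [dStar, dZero, constPrefixInsert]

end Tuples

section Chains

variable {X : Type} {n : ℕ}

/-- The contribution `d_i^{(*_0)} - d_i^{(*)}` of the `i`-th entry to the rack boundary. -/
def faceDiff (op : X → X → X) (n : ℕ) (i : Fin (n + 1)) :
    RackChain X (n + 1) →+ RackChain X n :=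
  FreeAbelianGroup.map (dZero n i) - FreeAbelianGroup.map (dStar op n i)

theorem faceDiff_of (op : X → X → X) (i : Fin (n + 1)) (x : Fin (n + 1) → X) :
    faceDiff op n i (FreeAbelianGroup.of x) =
      FreeAbelianGroup.of (dZero n i x) - FreeAbelianGroup.of (dStar op n i x) := by
  simp [faceDiff]

theorem rackBoundary_eq_sum_faceDiff (op : X → X → X) (n : ℕ) :
    rackBoundary op n = ∑ i : Fin (n + 1), (-1 : ℤ) ^ ((i : ℕ) + 1) • faceDiff op n i := by
  ext x
  simp [rackBoundary, faceDiff_of]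

/-- The sum of the coefficients of a chain. -/
def augmentation (X : Type) (n : ℕ) : RackChain X n →+ ℤ :=
  FreeAbelianGroup.lift fun _ => 1

theorem augmentation_rackBoundary (op : X → X → X) (c : RackChain X (n + 1)) :
    augmentation X n (rackBoundary op n c) = 0 := by
  suffices h : (augmentation X n).comp (rackBoundary op n) = 0 from DFunLike.congr_fun h c
  ext x
  simp [augmentation, rackBoundary]

theorem augmentation_eq_zero_of_nsmul_mem_range {op : X → X → X} {c : RackChain X n} {k : ℕ}
    (hk : k ≠ 0) (hc : k • c ∈ (rackBoundary op n).range) : augmentation X n c = 0 := by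
  obtain ⟨d, hd⟩ := hc
  have hkc : k • augmentation X n c = 0 := by
    rw [← map_nsmul, ← hd, augmentation_rackBoundary]
  exact (smul_eq_zero.mp hkc).resolve_left hk

/-- The homology class of a cycle. -/
def homologyClass (op : X → X → X) (n : ℕ) : rackCycles op n →+ rackHomology op n :=
  QuotientAddGroup.mk' (rackBoundaries op n)

theorem homologyClass_surjective (op : X → X → X) (n : ℕ) :
    Function.Surjective (homologyClass op n) :=
  QuotientAddGroup.mk'_surjective (rackBoundaries op n)

theorem homologyClass_eq_zero_iff {op : X → X → X} {c : rackCycles op n} :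
    homologyClass op n c = 0 ↔ (c : RackChain X (n + 1)) ∈ (rackBoundary op (n + 1)).range :=
  QuotientAddGroup.eq_zero_iff (N := rackBoundaries op n) c

end Chains

section Homotopy

variable {X : Type} [Fintype X] {n : ℕ}

/-- The operator `S_j`, sending `x` to the sum over all `y` of `(y, …, y, x_j, x_{j+1}, …)`. -/
def constPrefixSum (X : Type) [Fintype X] (n j : ℕ) : RackChain X n →+ RackChain X n :=
  FreeAbelianGroup.lift fun x => ∑ y, FreeAbelianGroup.of (constPrefix j y x)

theorem constPrefixSum_zero (c : RackChain X n) :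
    constPrefixSum X n 0 c = Fintype.card X • c := by
  suffices h : constPrefixSum X n 0 = Fintype.card X • AddMonoidHom.id _ from
    DFunLike.congr_fun h c
  ext x
  simp [constPrefixSum, constPrefix_zero]

theorem constPrefixSum_length (c : RackChain X n) :
    constPrefixSum X n n c =
      augmentation X n c • ∑ y : X, FreeAbelianGroup.of fun _ : Fin n => y := by
  suffices h : constPrefixSum X n n = (zmultiplesHom (RackChain X n)
      (∑ y : X, FreeAbelianGroup.of fun _ => y)).comp (augmentation X n) from
    DFunLike.congr_fun h c
  ext x
  simp [constPrefixSum, constPrefix_length, augmentation]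

/-- The chain `∑ y, (a, …, a, y, x_j, x_{j+1}, …)`. -/
def constPrefixInsertSum (j : ℕ) (a : X) (x : Fin n → X) : RackChain X (n + 1) :=
  ∑ y, FreeAbelianGroup.of (constPrefixInsert j a y x)

theorem faceDiff_constPrefixInsertSum_of_lt {op : X → X → X} (hid : ∀ a, op a a = a) {j : ℕ}
    {i : Fin (n + 1)} (hij : (i : ℕ) < j) (a : X) (x : Fin n → X) :
    faceDiff op n i (constPrefixInsertSum j a x) = 0 := by
  simp [constPrefixInsertSum, faceDiff_of, dStar_constPrefixInsert_of_lt hid hij]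

theorem faceDiff_constPrefixInsertSum_self {op : X → X → X} {a : X}
    (ha : Function.Bijective (op a)) (j : Fin (n + 1)) (x : Fin n → X) :
    faceDiff op n j (constPrefixInsertSum j a x) =
      Fintype.card X • FreeAbelianGroup.of (constPrefix j a x) -
        constPrefixSum X n j (FreeAbelianGroup.of x) := by
  have hreindex := ha.sum_comp fun y => FreeAbelianGroup.of (constPrefix j y x)
  simp [constPrefixInsertSum, constPrefixSum, faceDiff_of, dZero_constPrefixInsert_self,
    dStar_constPrefixInsert_self, hreindex]

theorem faceDiff_succ_constPrefixInsertSum {op : X → X → X} {j : ℕ} {k : Fin (n + 1)}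
    (hjk : j ≤ k) (a : X) {x : Fin (n + 1) → X}
    (hx : Function.Bijective fun y => op y (x k)) :
    faceDiff op (n + 1) k.succ (constPrefixInsertSum j a x) =
      constPrefixInsertSum j a (dZero n k x) -
        constPrefixInsertSum j (op a (x k)) (dStar op n k x) := by
  have hreindex := hx.sum_comp fun y =>
    FreeAbelianGroup.of (constPrefixInsert j (op a (x k)) y (dStar op n k x))
  simp [constPrefixInsertSum, faceDiff_of, dZero_succ_constPrefixInsert hjk,
    dStar_succ_constPrefixInsert op hjk, hreindex]

theorem constPrefixInsertSum_dStar_of_le (op : X → X → X) {j : ℕ} {k : Fin (n + 1)}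
    (hkj : (k : ℕ) ≤ j) (a : X) (x : Fin (n + 1) → X) :
    constPrefixInsertSum j a (dStar op n k x) = constPrefixInsertSum j a (dZero n k x) := by
  simp only [constPrefixInsertSum, constPrefixInsert_dStar_of_le op hkj]

/-- The homotopy `x ↦ ∑ y, (x_s, …, x_s, y, x_j, x_{j+1}, …)`, used for `j = s` and `j = s + 1`;
it is set to zero on tuples too short to have an entry `x_s`. -/
def constPrefixHomotopy (X : Type) [Fintype X] (j s n : ℕ) :
    RackChain X n →+ RackChain X (n + 1) :=
  FreeAbelianGroup.lift fun x =>
    if hs : s < n then constPrefixInsertSum j (x ⟨s, hs⟩) x else 0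

theorem constPrefixHomotopy_of (j : ℕ) (s : Fin n) (x : Fin n → X) :
    constPrefixHomotopy X j s n (FreeAbelianGroup.of x) = constPrefixInsertSum j (x s) x := by
  simp [constPrefixHomotopy]

theorem constPrefixHomotopy_faceDiff_of_le (op : X → X → X) {j s : ℕ} (hsj : s ≤ j)
    {k : Fin (n + 1)} (hks : (k : ℕ) ≤ s) (x : Fin (n + 1) → X) :
    constPrefixHomotopy X j s n (faceDiff op n k (FreeAbelianGroup.of x)) = 0 := by
  have hentry (hs : s < n) : dStar op n k x ⟨s, hs⟩ = dZero n k x ⟨s, hs⟩ := by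
    simp [dStar, dZero, hks.not_gt]
  simp [constPrefixHomotopy, faceDiff_of, hentry,
    constPrefixInsertSum_dStar_of_le op (hks.trans hsj)]

theorem faceDiff_succ_constPrefixHomotopy {op : X → X → X} (hid : ∀ a, op a a = a)
    (hright : ∀ b, Function.Bijective fun x => op x b) {j : ℕ} {s : Fin (n + 1)}
    (hsj : (s : ℕ) ≤ j) {k : Fin (n + 1)} (hjk : j ≤ k) (x : Fin (n + 1) → X) :
    faceDiff op (n + 1) k.succ (constPrefixHomotopy X j s (n + 1) (FreeAbelianGroup.of x)) =
      constPrefixHomotopy X j s n (faceDiff op n k (FreeAbelianGroup.of x)) := by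
  rw [constPrefixHomotopy_of, faceDiff_succ_constPrefixInsertSum hjk (x s) (hright (x k))]
  obtain rfl | hsk := (Fin.le_def.mpr (hsj.trans hjk)).eq_or_lt
  · rw [constPrefixHomotopy_faceDiff_of_le op hsj le_rfl, hid,
      constPrefixInsertSum_dStar_of_le op hsj, sub_self]
  · have hs : (s : ℕ) < n := by omega
    have hZero : dZero n k x ⟨s, hs⟩ = x s := by simp [dZero, hsk]
    have hStar : dStar op n k x ⟨s, hs⟩ = op (x s) (x k) := by simp [dStar, hsk]
    simp [constPrefixHomotopy, faceDiff_of, hs, hZero, hStar]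

theorem faceDiff_succAbove_constPrefixHomotopy {op : X → X → X} (hid : ∀ a, op a a = a)
    (hright : ∀ b, Function.Bijective fun x => op x b) {j : Fin (n + 2)} {s : Fin (n + 1)}
    (hsj : (s : ℕ) ≤ j) (hjs : (j : ℕ) ≤ s + 1) (k : Fin (n + 1)) (x : Fin (n + 1) → X) :
    (-1 : ℤ) ^ ((j.succAbove k : ℕ) + 1) • faceDiff op (n + 1) (j.succAbove k)
        (constPrefixHomotopy X j s (n + 1) (FreeAbelianGroup.of x)) =
      -((-1 : ℤ) ^ ((k : ℕ) + 1) •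
        constPrefixHomotopy X j s n (faceDiff op n k (FreeAbelianGroup.of x))) := by
  obtain hkj | hjk := lt_or_ge (k : ℕ) j
  · rw [Fin.succAbove_of_castSucc_lt j k (Fin.lt_def.mpr hkj), constPrefixHomotopy_of,
      faceDiff_constPrefixInsertSum_of_lt hid (by simpa using hkj),
      constPrefixHomotopy_faceDiff_of_le op hsj (by omega), smul_zero, smul_zero, neg_zero]
  · rw [Fin.succAbove_of_le_castSucc j k (Fin.le_def.mpr hjk),
      faceDiff_succ_constPrefixHomotopy hid hright hsj hjk, Fin.val_succ, pow_succ _ (_ + 1),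
      mul_neg_one, neg_smul]

theorem rackBoundary_constPrefixHomotopy_of {op : X → X → X} (hid : ∀ a, op a a = a)
    (hleft : ∀ a, Function.Bijective (op a)) (hright : ∀ b, Function.Bijective fun x => op x b)
    {j : Fin (n + 2)} {s : Fin (n + 1)} (hsj : (s : ℕ) ≤ j) (hjs : (j : ℕ) ≤ s + 1)
    (x : Fin (n + 1) → X) :
    rackBoundary op (n + 1) (constPrefixHomotopy X j s (n + 1) (FreeAbelianGroup.of x)) =
      (-1 : ℤ) ^ ((j : ℕ) + 1) • (Fintype.card X • FreeAbelianGroup.of (constPrefix j (x s) x) -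
        constPrefixSum X (n + 1) j (FreeAbelianGroup.of x)) -
      constPrefixHomotopy X j s n (rackBoundary op n (FreeAbelianGroup.of x)) := by
  simp only [rackBoundary_eq_sum_faceDiff, AddMonoidHom.finsetSum_apply, AddMonoidHom.smul_apply,
    map_sum, map_zsmul]
  rw [Fin.sum_univ_succAbove _ j]
  simp only [faceDiff_succAbove_constPrefixHomotopy hid hright hsj hjs,
    Finset.sum_neg_distrib, ← sub_eq_add_neg]
  rw [constPrefixHomotopy_of, faceDiff_constPrefixInsertSum_self (hleft (x s))]

theorem card_nsmul_sub_constPrefixSum_mem_range {op : X → X → X} (hid : ∀ a, op a a = a)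
    (hleft : ∀ a, Function.Bijective (op a)) (hright : ∀ b, Function.Bijective fun x => op x b)
    {j : Fin (n + 2)} {s : Fin (n + 1)} (hsj : (s : ℕ) ≤ j) (hjs : (j : ℕ) ≤ s + 1)
    {c : RackChain X (n + 1)} (hc : rackBoundary op n c = 0) :
    Fintype.card X • FreeAbelianGroup.map (fun x => constPrefix j (x s) x) c -
      constPrefixSum X (n + 1) j c ∈ (rackBoundary op (n + 1)).range := by
  have hhomotopy :
      (rackBoundary op (n + 1)).comp (constPrefixHomotopy X j s (n + 1)) =
        (-1 : ℤ) ^ ((j : ℕ) + 1) •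
          (Fintype.card X • FreeAbelianGroup.map (fun x => constPrefix j (x s) x) -
            constPrefixSum X (n + 1) j) -
        (constPrefixHomotopy X j s n).comp (rackBoundary op n) := by
    ext x
    simpa using rackBoundary_constPrefixHomotopy_of hid hleft hright hsj hjs x
  have hcycle := DFunLike.congr_fun hhomotopy c
  simp only [AddMonoidHom.comp_apply, AddMonoidHom.sub_apply, AddMonoidHom.smul_apply, hc,
    map_zero, sub_zero] at hcycle
  refine ⟨(-1 : ℤ) ^ ((j : ℕ) + 1) • constPrefixHomotopy X j s (n + 1) c, ?_⟩
  rw [map_zsmul, hcycle, smul_smul, ← mul_pow, neg_one_mul, neg_neg, one_pow, one_smul]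

theorem constPrefixSum_sub_succ_mem_range {op : X → X → X} (hid : ∀ a, op a a = a)
    (hleft : ∀ a, Function.Bijective (op a)) (hright : ∀ b, Function.Bijective fun x => op x b)
    (s : Fin (n + 1)) {c : RackChain X (n + 1)} (hc : rackBoundary op n c = 0) :
    constPrefixSum X (n + 1) s c - constPrefixSum X (n + 1) (s + 1) c ∈
      (rackBoundary op (n + 1)).range := by
  have hbefore := card_nsmul_sub_constPrefixSum_mem_range hid hleft hright
    (j := s.castSucc) (s := s) (by simp) (by simp) hc
  have hafter := card_nsmul_sub_constPrefixSum_mem_range hid hleft hright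
    (j := s.succ) (s := s) (by simp) (by simp) hc
  simp only [Fin.val_succ, constPrefix_succ_apply_self] at hafter
  simpa using sub_mem hafter hbefore

theorem constPrefixSum_zero_sub_mem_range {op : X → X → X} (hid : ∀ a, op a a = a)
    (hleft : ∀ a, Function.Bijective (op a)) (hright : ∀ b, Function.Bijective fun x => op x b)
    {c : RackChain X (n + 1)} (hc : rackBoundary op n c = 0) {j : ℕ} (hj : j ≤ n + 1) :
    constPrefixSum X (n + 1) 0 c - constPrefixSum X (n + 1) j c ∈
      (rackBoundary op (n + 1)).range := by
  induction j with
  | zero => simp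
  | succ j ih =>
    have hstep := constPrefixSum_sub_succ_mem_range hid hleft hright ⟨j, hj⟩ hc
    simpa using add_mem (ih (by omega)) hstep

theorem card_nsmul_mem_range_of_augmentation_eq_zero {op : X → X → X} (hid : ∀ a, op a a = a)
    (hleft : ∀ a, Function.Bijective (op a)) (hright : ∀ b, Function.Bijective fun x => op x b)
    {c : RackChain X (n + 1)} (hc : rackBoundary op n c = 0)
    (haug : augmentation X (n + 1) c = 0) :
    Fintype.card X • c ∈ (rackBoundary op (n + 1)).range := by
  simpa only [constPrefixSum_zero, constPrefixSum_length, haug, zero_smul, sub_zero] using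
    constPrefixSum_zero_sub_mem_range hid hleft hright hc le_rfl

end Homotopy

theorem quasigroup_rack_torsion_annihilated_general
    {X : Type} [Fintype X] (op : X → X → X) (hid : ∀ a : X, op a a = a)
    (hleft : ∀ a : X, Function.Bijective (op a))
    (hright : ∀ b : X, Function.Bijective fun x => op x b)
    (n : ℕ) (h : rackHomology op n) (htors : ∃ k : ℕ, k ≠ 0 ∧ k • h = 0) :
    Fintype.card X • h = 0 := by
  obtain ⟨k, hk, hkh⟩ := htors
  obtain ⟨c, rfl⟩ := homologyClass_surjective op n h
  rw [← map_nsmul, homologyClass_eq_zero_iff, AddSubgroup.coe_nsmul] at hkh ⊢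
  exact card_nsmul_mem_range_of_augmentation_eq_zero hid hleft hright c.2
    (augmentation_eq_zero_of_nsmul_mem_range hk hkh)

/-- For a finite quasigroup rack `X`, the torsion subgroup of
every rack homology group `H_n^R(X)` (`n ≥ 1`) is annihilated by `|X|`. -/
theorem quasigroup_rack_torsion_annihilated
    {X : Type} [Fintype X] (op : X → X → X)
    (hbij : ∀ b : X, Function.Bijective fun x => op x b)
    (hdist : ∀ a b c : X, op (op a b) c = op (op a c) (op b c))
    (hqg : ∀ a b : X, ∃! x : X, op a x = b) :
    ∀ n : ℕ, ∀ h : rackHomology op n,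
      (∃ k : ℕ, k ≠ 0 ∧ k • h = 0) → Fintype.card X • h = 0 := by
  have hleft (a : X) : Function.Bijective (op a) :=
    (Function.bijective_iff_existsUnique _).2 (hqg a)
  have hid := op_self_of_rightDistrib (fun b => (hbij b).2) (fun a => (hleft a).1) hdist
  exact quasigroup_rack_torsion_annihilated_general op hid hleft hbij
end

section
/- Let X be a finite m-almost quasigroup quandle with m ≤ 3. Then for every a ∈ X the stabilizer S_a is a trivial subquandle of X, i.e. x*y = x for all x, y ∈ S_a. -/
/-!
Write `x ◃ y` for `y * x`, so that each `a ◃ ·` is an automorphism, and let `S a` be the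
stabilizer of `a`. If `x, y ∈ S a`, then `a`, `x`, `y`, `y ◃ x` all lie in `S a`, so two of them
coincide, and this forces `y ◃ x = x` as soon as `y ≠ a`. What remains is that `x ∈ S a` implies
`a ∈ S x`. If `z = a ◃ x` differs from `x`, then `a` swaps `x` and `z`, and `S x = S z`, so `a`
maps `S x` to itself. Since `S x` is as large as `S a`, which contains `a`, `x`, `z`, it has an
element `w` besides `x` and `z`; the action of `a` must fix `w`, and therefore `a ∈ S w = S x`.
-/

theorem eq_triple_of_encard_le_three {α : Type*} {s : Set α} (hs : s.encard ≤ 3) {a b c : α}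
    (ha : a ∈ s) (hb : b ∈ s) (hc : c ∈ s) (hab : a ≠ b) (hac : a ≠ c) (hbc : b ≠ c) :
    s = {a, b, c} := by
  have hcard : ({a, b, c} : Set α).encard = 3 := Set.encard_eq_three.2 ⟨a, b, c, hab, hac, hbc, rfl⟩
  have hsub : ({a, b, c} : Set α) ⊆ s :=
    Set.insert_subset ha (Set.insert_subset hb (Set.singleton_subset_iff.2 hc))
  exact ((Set.toFinite _).eq_of_subset_of_encard_le hsub (hcard ▸ hs)).symm

open scoped Quandles

theorem quandle_act_eq_left_iff {Q : Type*} [Quandle Q] {a x : Q} : a ◃ x = a ↔ x = a := by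
  simpa only [Quandle.fix] using Rack.left_cancel a (y := x) (y' := a)

/-- The stabilizer `S_a = {x | a * x = a}` of an element `a`; the product `a * x` is `x ◃ a` in the
left-handed convention of `Shelf`. -/
def quandleStabilizer {S : Type*} [Shelf S] (a : S) : Set S :=
  {x | x ◃ a = a}

namespace quandleStabilizer

theorem act_mem_act {S : Type*} [Shelf S] {a x : S} (b : S) (hx : x ∈ quandleStabilizer a) :
    b ◃ x ∈ quandleStabilizer (b ◃ a) :=
  Shelf.self_distrib.symm.trans (congrArg (b ◃ ·) hx)

theorem act_mem {S : Type*} [Shelf S] {a x y : S} (hx : x ∈ quandleStabilizer a)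
    (hy : y ∈ quandleStabilizer a) : y ◃ x ∈ quandleStabilizer a := by
  have hy' : y ◃ a = a := hy
  simpa only [hy'] using act_mem_act y hx

variable {Q : Type*} [Quandle Q] {a x y z w : Q}

theorem self_mem (a : Q) : a ∈ quandleStabilizer a :=
  Quandle.fix

theorem act_eq_of_ne (ha : (quandleStabilizer a).encard ≤ 3) (hx : x ∈ quandleStabilizer a)
    (hy : y ∈ quandleStabilizer a) (hya : y ≠ a) : y ◃ x = x := by
  rcases eq_or_ne x a with rfl | hxa
  · exact hy
  rcases eq_or_ne x y with rfl | hxy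
  · exact Quandle.fix
  have ne_a : y ◃ x ≠ a := fun h ↦ hxa ((Rack.left_cancel y).1 (h.trans hy.symm))
  have ne_y : y ◃ x ≠ y := quandle_act_eq_left_iff.not.2 hxy
  have htriple : quandleStabilizer a = {a, x, y} :=
    eq_triple_of_encard_le_three ha (self_mem a) hx hy hxa.symm hya.symm hxy
  have hmem : y ◃ x ∈ ({a, x, y} : Set Q) := htriple ▸ act_mem hx hy
  simpa [ne_a, ne_y] using hmem

theorem act_act_eq (ha : (quandleStabilizer a).encard ≤ 3) (hx : x ∈ quandleStabilizer a) :
    a ◃ a ◃ x = x := by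
  rcases eq_or_ne (a ◃ x) x with hfix | hmove
  · rw [hfix, hfix]
  have hxa : x ≠ a := by
    rintro rfl
    exact hmove Quandle.fix
  have hza : a ◃ x ≠ a := quandle_act_eq_left_iff.not.2 hxa
  have ne_a : a ◃ a ◃ x ≠ a := quandle_act_eq_left_iff.not.2 hza
  have ne_z : a ◃ a ◃ x ≠ a ◃ x := (Rack.left_cancel a).not.2 hmove
  have hz : a ◃ x ∈ quandleStabilizer a := act_mem hx (self_mem a)
  have htriple : quandleStabilizer a = {a, x, a ◃ x} :=
    eq_triple_of_encard_le_three ha (self_mem a) hx hz hxa.symm hza.symm hmove.symm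
  have hmem : a ◃ a ◃ x ∈ ({a, x, a ◃ x} : Set Q) := htriple ▸ act_mem hz (self_mem a)
  simpa [ne_a, ne_z] using hmem

theorem subset_of_mem_of_mem (hx : (quandleStabilizer x).encard ≤ 3)
    (hzx : z ∈ quandleStabilizer x) (hxz : x ∈ quandleStabilizer z) :
    quandleStabilizer x ⊆ quandleStabilizer z := by
  intro w hw
  rcases eq_or_ne w x with rfl | hwx
  · exact hxz
  · exact act_eq_of_ne hx hzx hw hwx

theorem mem_of_swap (hle : ∀ b : Q, (quandleStabilizer b).encard ≤ 3)
    (hax : a ◃ x = z) (haz : a ◃ z = x) (hne : x ≠ z) (hzx : z ∈ quandleStabilizer x)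
    (hw : w ∈ quandleStabilizer x) (hwx : w ≠ x) (hwz : w ≠ z) : a ∈ quandleStabilizer x := by
  have hxz : x ∈ quandleStabilizer z := by
    simpa only [hax, haz] using act_mem_act a hzx
  have hwSz : w ∈ quandleStabilizer z := subset_of_mem_of_mem (hle x) hzx hxz hw
  have hawSx : a ◃ w ∈ quandleStabilizer x := by
    have hawSz : a ◃ w ∈ quandleStabilizer z := hax ▸ act_mem_act a hw
    exact subset_of_mem_of_mem (hle z) hxz hzx hawSz
  have htriple : quandleStabilizer x = {x, z, w} :=
    eq_triple_of_encard_le_three (hle x) (self_mem x) hzx hw hne hwx.symm hwz.symm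
  have haw : a ◃ w = w := by
    have ne_z : a ◃ w ≠ z := hax ▸ (Rack.left_cancel a).not.2 hwx
    have ne_x : a ◃ w ≠ x := haz ▸ (Rack.left_cancel a).not.2 hwz
    simpa [ne_x, ne_z] using (htriple ▸ hawSx : a ◃ w ∈ ({x, z, w} : Set Q))
  have hxw : x ∈ quandleStabilizer w := act_eq_of_ne (hle z) hwSz hxz hne
  exact subset_of_mem_of_mem (hle w) hxw hw haw

theorem mem_symm {m : ℕ} (hm : m ≤ 3) (hcard : ∀ a : Q, (quandleStabilizer a).encard = m)
    (hx : x ∈ quandleStabilizer a) : a ∈ quandleStabilizer x := by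
  have hle (b : Q) : (quandleStabilizer b).encard ≤ 3 := (hcard b).trans_le (mod_cast hm)
  rcases eq_or_ne x a with rfl | hxa
  · exact self_mem x
  rcases eq_or_ne (a ◃ x) x with hfix | hmove
  · exact hfix
  have hz : a ◃ x ∈ quandleStabilizer a := act_mem hx (self_mem a)
  have hza : a ◃ x ≠ a := quandle_act_eq_left_iff.not.2 hxa
  have hzx : a ◃ x ∈ quandleStabilizer x := act_eq_of_ne (hle a) hx hz hza
  have hpair : ({x, a ◃ x} : Set Q) ⊂ quandleStabilizer a :=
    (Set.ssubset_iff_of_subset (Set.pair_subset hx hz)).2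
      ⟨a, self_mem a, by simp [hxa.symm, hza.symm]⟩
  have hlt : ({x, a ◃ x} : Set Q).encard < (quandleStabilizer x).encard := by
    rw [hcard x, ← hcard a]
    exact (Set.toFinite _).encard_lt_encard hpair
  obtain ⟨w, hw, hw_pair⟩ : ∃ w ∈ quandleStabilizer x, w ∉ ({x, a ◃ x} : Set Q) :=
    Set.not_subset.1 fun h ↦ hlt.not_ge (Set.encard_le_encard h)
  obtain ⟨hwx, hwz⟩ : w ≠ x ∧ w ≠ a ◃ x := by simpa using hw_pair
  exact mem_of_swap hle rfl (act_act_eq (hle a) hx) hmove.symm hzx hw hwx hwz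

end quandleStabilizer

/-- A right-distributive idempotent operation with bijective right translations, as an instance of
Mathlib's left-handed `Quandle`, with `b ◃ a = op a b`. -/
noncomputable abbrev quandleOfRightOp {X : Type*} (op : X → X → X) (hidem : ∀ a, op a a = a)
    (hbij : ∀ b, Function.Bijective fun x ↦ op x b)
    (hdist : ∀ a b c, op (op a b) c = op (op a c) (op b c)) : Quandle X where
  act b a := op a b
  self_distrib := hdist _ _ _
  invAct b := (Equiv.ofBijective _ (hbij b)).symm
  left_inv b := (Equiv.ofBijective _ (hbij b)).symm_apply_apply
  right_inv b := (Equiv.ofBijective _ (hbij b)).apply_symm_apply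
  fix := hidem _

theorem mAQ_le_three_stabilizer_trivial_general {Q : Type*} [Quandle Q] {m : ℕ} (hm : m ≤ 3)
    (hcard : ∀ a : Q, (quandleStabilizer a).encard = m) {a x y : Q}
    (hx : x ∈ quandleStabilizer a) (hy : y ∈ quandleStabilizer a) : y ◃ x = x := by
  rcases eq_or_ne y a with rfl | hya
  · exact quandleStabilizer.mem_symm hm hcard hx
  · exact quandleStabilizer.act_eq_of_ne ((hcard a).trans_le (mod_cast hm)) hx hy hya

/-- In a finite `m`-almost quasigroup quandle with `m ≤ 3`, every
stabilizer `S_a` is a trivial subquandle: `x * y = x` for all `x, y ∈ S_a`. -/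
theorem mAQ_le_three_stabilizer_trivial
    {X : Type*} [Fintype X] [DecidableEq X] (op : X → X → X) (m : ℕ)
    (hm : 1 ≤ m)
    (hidem : ∀ a : X, op a a = a)
    (hbij : ∀ b : X, Function.Bijective fun x => op x b)
    (hdist : ∀ a b c : X, op (op a b) c = op (op a c) (op b c))
    (hstab : ∀ a : X, (Finset.univ.filter fun x => op a x = a).card = m)
    (hsol : ∀ a b : X, op a b ≠ a → ∃! x : X, op a x = b)
    (hm3 : m ≤ 3) :
    ∀ a x y : X, op a x = a → op a y = a → op x y = x := by
  let _ : Quandle X := quandleOfRightOp op hidem hbij hdist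
  have hcard (a : X) : (quandleStabilizer a).encard = m := by
    rw [← hstab a, ← Set.encard_coe_eq_coe_finsetCard, Finset.coe_filter_univ]
    rfl
  intro a x y hx hy
  exact mAQ_le_three_stabilizer_trivial_general hm3 hcard hx hy
end

section
/- Let X be a nontrivial m-almost quasigroup quandle (i.e. there exist a, b ∈ X with a*b ≠ a) such that for every a ∈ X the stabilizer S_a is a trivial subquandle of X. Then X is connected; in fact, for any a, b ∈ X there exist y_1, y_2 ∈ X with (a*y_1)*y_2 = b. -/
/-!
When all stabilizers are trivial subquandles, the relation `a * x = a` between `a` and `x` is an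
equivalence relation. If `a` and `b` are inequivalent, then `b = a * y` for some `y`, and
`b * b = b` supplies a second step. If they are equivalent, nontriviality provides a `c` outside
their common class, and one step leads from `a` to `c` and another from `c` to `b`.
-/

theorem exists_not_rel_of_rel {α : Type*} {r : α → α → Prop} (hr : Equivalence r)
    (hne : ∃ u v, ¬ r u v) {a b : α} (hab : r a b) : ∃ c, ¬ r a c ∧ ¬ r c b := by
  obtain ⟨c, hac⟩ : ∃ c, ¬ r a c := by
    by_contra! hall
    obtain ⟨u, v, huv⟩ := hne
    exact huv (hr.trans (hr.symm (hall u)) (hall v))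
  exact ⟨c, hac, fun hcb => hac (hr.trans hab (hr.symm hcb))⟩

/-- The group `Inn(X)` generated by the right translations `x ↦ op x c`. Since `op` is an arbitrary
binary operation, only those right translations that are permutations contribute generators. -/
def innerGroup {X : Type*} (op : X → X → X) : Subgroup (Equiv.Perm X) :=
  Subgroup.closure {g | ∃ c : X, ∀ x : X, g x = op x c}

section BinaryOperation

variable {X : Type*} {op : X → X → X}

theorem ofBijective_mem_innerGroup {c : X} (hc : Function.Bijective fun x => op x c) :
    Equiv.ofBijective _ hc ∈ innerGroup op :=
  Subgroup.subset_closure ⟨c, fun _ => rfl⟩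

theorem exists_mem_innerGroup_apply_eq_op_op {y₁ y₂ : X}
    (h₁ : Function.Bijective fun x => op x y₁) (h₂ : Function.Bijective fun x => op x y₂) (a : X) :
    ∃ g ∈ innerGroup op, g a = op (op a y₁) y₂ :=
  ⟨Equiv.ofBijective _ h₂ * Equiv.ofBijective _ h₁,
    mul_mem (ofBijective_mem_innerGroup h₂) (ofBijective_mem_innerGroup h₁), rfl⟩

theorem equivalence_op_eq_left (hidem : ∀ a, op a a = a)
    (htriv : ∀ a x y, op a x = a → op a y = a → op x y = x) :
    Equivalence fun a x => op a x = a := by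
  have hsymm {a x : X} (h : op a x = a) : op x a = x := htriv a x a h (hidem a)
  exact ⟨hidem, hsymm, fun {x y z} hxy hyz => htriv y x z (hsymm hxy) hyz⟩

theorem exists_op_op_eq (hidem : ∀ a, op a a = a)
    (hsol : ∀ a b, op a b ≠ a → ∃ x, op a x = b) (hnontriv : ∃ a b, op a b ≠ a)
    (htriv : ∀ a x y, op a x = a → op a y = a → op x y = x) (a b : X) :
    ∃ y₁ y₂, op (op a y₁) y₂ = b := by
  by_cases hab : op a b = a
  · obtain ⟨c, hac, hcb⟩ :=
      exists_not_rel_of_rel (equivalence_op_eq_left hidem htriv) hnontriv hab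
    obtain ⟨y₁, rfl⟩ := hsol a c hac
    obtain ⟨y₂, hy₂⟩ := hsol _ b hcb
    exact ⟨y₁, y₂, hy₂⟩
  · obtain ⟨y, rfl⟩ := hsol a b hab
    exact ⟨y, op a y, hidem _⟩

theorem mAQ_trivial_stabilizers_connected_general (hidem : ∀ a, op a a = a)
    (hbij : ∀ b, Function.Bijective fun x => op x b)
    (hsol : ∀ a b, op a b ≠ a → ∃ x, op a x = b) (hnontriv : ∃ a b, op a b ≠ a)
    (htriv : ∀ a x y, op a x = a → op a y = a → op x y = x) :
    (∀ a b, ∃ g ∈ innerGroup op, g a = b) ∧ ∀ a b, ∃ y₁ y₂, op (op a y₁) y₂ = b := by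
  have htwo := exists_op_op_eq hidem hsol hnontriv htriv
  refine ⟨fun a b => ?_, htwo⟩
  obtain ⟨y₁, y₂, rfl⟩ := htwo a b
  exact exists_mem_innerGroup_apply_eq_op_op (hbij y₁) (hbij y₂) a

end BinaryOperation

/-- A nontrivial `m`-almost quasigroup quandle all of whose
stabilizers are trivial subquandles is connected (the group of permutations
generated by the right translations acts transitively); in fact any `b` can be
reached from any `a` in two steps: `(a * y₁) * y₂ = b`. -/
theorem mAQ_trivial_stabilizers_connected
    {X : Type*} (op : X → X → X) (m : ℕ)
    (hm : 1 ≤ m)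
    (hidem : ∀ a : X, op a a = a)
    (hbij : ∀ b : X, Function.Bijective fun x => op x b)
    (hdist : ∀ a b c : X, op (op a b) c = op (op a c) (op b c))
    (hstab : ∀ a : X, Set.ncard {x : X | op a x = a} = m)
    (hsol : ∀ a b : X, op a b ≠ a → ∃! x : X, op a x = b)
    (hnontriv : ∃ a b : X, op a b ≠ a)
    (htriv : ∀ a x y : X, op a x = a → op a y = a → op x y = x) :
    (∀ a b : X, ∃ g ∈ Subgroup.closure {g : Equiv.Perm X | ∃ c : X, ∀ x : X, g x = op x c},
      g a = b) ∧
    (∀ a b : X, ∃ y₁ y₂ : X, op (op a y₁) y₂ = b) :=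
  mAQ_trivial_stabilizers_connected_general hidem hbij (fun a b hab => (hsol a b hab).exists)
    hnontriv htriv
end

section
/- Let X be an m-almost quasigroup quandle and a ∈ X. Then the stabilizer S_a is a trivial subquandle of X (i.e. x*y = x for all x, y ∈ S_a) if and only if S_b = S_a for every b ∈ S_a. -/
/-!
By definition, `S_a` is trivial exactly when `S_a ⊆ S_b` for every `b ∈ S_a`. Since `S_a` is finite
and no `S_b` is larger than `S_a`, each of these inclusions is an equality.
-/

theorem encard_eq_coe_of_ncard_eq {α : Type*} {s : Set α} {n : ℕ} (hn : 0 < n)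
    (hs : s.ncard = n) : s.encard = n := by
  subst hs
  exact (Set.finite_of_ncard_pos hn).cast_ncard_eq.symm

section Magma

variable {X : Type*} (op : X → X → X)

/-- The stabilizer `S_a` of `a` under right multiplication, for an arbitrary binary operation. -/
def rightStabilizer (a : X) : Set X :=
  {x | op a x = a}

/-- A trivial subquandle, encoded as a set on which the operation is the first projection; such a
set is automatically closed under the operation. -/
def IsTrivialOn (S : Set X) : Prop :=
  ∀ x ∈ S, ∀ y ∈ S, op x y = x

theorem isTrivialOn_iff_forall_subset_rightStabilizer {S : Set X} :
    IsTrivialOn op S ↔ ∀ b ∈ S, S ⊆ rightStabilizer op b :=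
  Iff.rfl

theorem mAQ_stabilizer_trivial_iff_general {a : X} (hfin : (rightStabilizer op a).Finite)
    (hcard : ∀ b ∈ rightStabilizer op a,
      (rightStabilizer op b).encard ≤ (rightStabilizer op a).encard) :
    IsTrivialOn op (rightStabilizer op a) ↔
      ∀ b ∈ rightStabilizer op a, rightStabilizer op b = rightStabilizer op a := by
  rw [isTrivialOn_iff_forall_subset_rightStabilizer]
  refine forall₂_congr fun b hb => ⟨fun hsub => ?_, fun heq => heq.superset⟩
  exact (hfin.eq_of_subset_of_encard_le hsub (hcard b hb)).symm

end Magma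

/-- In an `m`-almost quasigroup quandle, the stabilizer `S_a` is a
trivial subquandle if and only if `S_b = S_a` for every `b ∈ S_a`. -/
theorem mAQ_stabilizer_trivial_iff
    {X : Type*} (op : X → X → X) (m : ℕ)
    (hm : 1 ≤ m)
    (hidem : ∀ a : X, op a a = a)
    (hbij : ∀ b : X, Function.Bijective fun x => op x b)
    (hdist : ∀ a b c : X, op (op a b) c = op (op a c) (op b c))
    (hstab : ∀ a : X, Set.ncard {x : X | op a x = a} = m)
    (hsol : ∀ a b : X, op a b ≠ a → ∃! x : X, op a x = b) :
    ∀ a : X,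
      ((∀ x ∈ {x : X | op a x = a}, ∀ y ∈ {x : X | op a x = a}, op x y = x) ↔
        (∀ b : X, op a b = a → {x : X | op b x = b} = {x : X | op a x = a})) := by
  have hcard (b : X) : (rightStabilizer op b).encard = m :=
    encard_eq_coe_of_ncard_eq hm (hstab b)
  exact fun a => mAQ_stabilizer_trivial_iff_general op (Set.finite_of_encard_eq_coe (hcard a))
    fun b _ => ((hcard b).trans (hcard a).symm).le
end

section
/- Let (X,*) be a finite nonempty quasigroup quandle and let T_n = {1,…,n} with n ≥ 1. Define an operation ◦ on X × T_n by (s,a) ◦ (t,b) = (s*t, a) if a = b, and (s,a) ◦ (t,b) = (s,a) if a ≠ b. Then (X × T_n, ◦) is a quandle, and it is an ((n−1)|X|+1)-almost quasigroup quandle. -/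
/-- The operation of the dynamical cocycle extension `X ×_α T_n`:
`(s,a) ◦ (t,b) = (s*t, a)` if `a = b`, and `(s,a)` otherwise. -/
def prodOp {X : Type*} (op : X → X → X) (n : ℕ)
    (p q : X × Fin n) : X × Fin n :=
  if p.2 = q.2 then (op p.1 q.1, p.2) else p

theorem encard_setOf_eq_or_snd_ne {α ι : Type*} (p : α × ι) :
    {q : α × ι | q = p ∨ q.2 ≠ p.2}.encard = (ENat.card ι - 1) * ENat.card α + 1 := by
  have hset : {q : α × ι | q = p ∨ q.2 ≠ p.2} = insert p (Set.univ ×ˢ {p.2}ᶜ) := by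
    ext q
    simp
  have hcompl : ({p.2}ᶜ : Set ι).encard = ENat.card ι - 1 := by
    rw [Set.compl_eq_univ_sdiff, Set.encard_sdiff_singleton_of_mem (Set.mem_univ p.2),
      Set.encard_univ]
  rw [hset, Set.encard_insert_of_notMem (by simp), Set.encard_prod, Set.encard_univ, hcompl,
    mul_comm]

section

variable {X : Type*} {op : X → X → X} {n : ℕ}

theorem prodOp_of_snd_eq {p q : X × Fin n} (h : p.2 = q.2) :
    prodOp op n p q = (op p.1 q.1, p.2) :=
  if_pos h

theorem prodOp_of_snd_ne {p q : X × Fin n} (h : p.2 ≠ q.2) : prodOp op n p q = p :=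
  if_neg h

theorem snd_prodOp (p q : X × Fin n) : (prodOp op n p q).2 = p.2 := by
  unfold prodOp
  split_ifs <;> rfl

theorem prodOp_self {p : X × Fin n} (hp : op p.1 p.1 = p.1) : prodOp op n p p = p := by
  rw [prodOp_of_snd_eq rfl, hp]

theorem bijective_prodOp_right {q : X × Fin n} (hq : Function.Bijective fun x => op x q.1) :
    Function.Bijective fun p => prodOp op n p q := by
  -- Acting by `q` permutes the slice `X × {q.2}` and fixes every other slice pointwise.
  let slicePerm : Fin n → Equiv.Perm X := fun a => if a = q.2 then .ofBijective _ hq else 1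
  convert (Equiv.prodCongrLeft slicePerm).bijective using 1
  ext1 ⟨x, a⟩
  by_cases ha : a = q.2 <;> simp [prodOp, slicePerm, ha]

theorem prodOp_right_distrib {p q r : X × Fin n}
    (hdist : op (op p.1 q.1) r.1 = op (op p.1 r.1) (op q.1 r.1)) :
    prodOp op n (prodOp op n p q) r = prodOp op n (prodOp op n p r) (prodOp op n q r) := by
  by_cases hpq : p.2 = q.2
  · by_cases hpr : p.2 = r.2
    · simp [prodOp, ← hpq, ← hpr, hdist]
    · have hqr : q.2 ≠ r.2 := hpq ▸ hpr
      rw [prodOp_of_snd_ne hpr, prodOp_of_snd_ne hqr, prodOp_of_snd_ne (by rwa [snd_prodOp])]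
  · have hpq' : (prodOp op n p r).2 ≠ (prodOp op n q r).2 := by rwa [snd_prodOp, snd_prodOp]
    rw [prodOp_of_snd_ne hpq, prodOp_of_snd_ne hpq']

theorem prodOp_eq_left_iff {p q : X × Fin n} (hidem : op p.1 p.1 = p.1)
    (huniq : ∀ x, op p.1 x = p.1 → x = p.1) :
    prodOp op n p q = p ↔ q = p ∨ q.2 ≠ p.2 := by
  refine ⟨fun h => or_iff_not_imp_right.2 fun hqp => ?_, ?_⟩
  · have hsnd : q.2 = p.2 := not_not.1 hqp
    rw [prodOp_of_snd_eq hsnd.symm] at h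
    exact Prod.ext (huniq q.1 (congrArg Prod.fst h)) hsnd
  · rintro (rfl | hqp)
    · exact prodOp_self hidem
    · exact prodOp_of_snd_ne hqp.symm

theorem existsUnique_prodOp_eq {p q : X × Fin n} (hne : q ≠ p) (hsnd : q.2 = p.2)
    (hsol : ∃! x, op p.1 x = q.1) : ∃! r, prodOp op n p r = q := by
  obtain ⟨x, hx, hx_unique⟩ := hsol
  refine ⟨(x, p.2), ?_, fun r (hr : prodOp op n p r = q) => ?_⟩
  · calc prodOp op n p (x, p.2) = (op p.1 x, p.2) := prodOp_of_snd_eq rfl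
      _ = q := Prod.ext hx hsnd.symm
  · have hpr : p.2 = r.2 := by
      by_contra hpr
      exact hne (hr.symm.trans (prodOp_of_snd_ne hpr))
    rw [prodOp_of_snd_eq hpr] at hr
    exact Prod.ext (hx_unique r.1 (congrArg Prod.fst hr)) hpr.symm

theorem prod_quasigroup_trivial_is_mAQ_general (op : X → X → X)
    (hidem : ∀ a : X, op a a = a)
    (hbij : ∀ b : X, Function.Bijective fun x => op x b)
    (hdist : ∀ a b c : X, op (op a b) c = op (op a c) (op b c))
    (hqg : ∀ a b : X, ∃! x : X, op a x = b)
    (n : ℕ) :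
    (∀ p : X × Fin n, prodOp op n p p = p) ∧
    (∀ q : X × Fin n, Function.Bijective fun p => prodOp op n p q) ∧
    (∀ p q r : X × Fin n,
      prodOp op n (prodOp op n p q) r
        = prodOp op n (prodOp op n p r) (prodOp op n q r)) ∧
    (∀ p : X × Fin n,
      {q | prodOp op n p q = p}.encard = (n - 1 : ℕ) * ENat.card X + 1) ∧
    (∀ p q : X × Fin n, prodOp op n p q ≠ p → ∃! r : X × Fin n, prodOp op n p r = q) := by
  have hstab (p q : X × Fin n) : prodOp op n p q = p ↔ q = p ∨ q.2 ≠ p.2 :=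
    prodOp_eq_left_iff (hidem p.1) fun _ hx => (hqg p.1 p.1).unique hx (hidem p.1)
  refine ⟨fun p => prodOp_self (hidem p.1), fun q => bijective_prodOp_right (hbij q.1),
    fun p q r => prodOp_right_distrib (hdist p.1 q.1 r.1), fun p => ?_, fun p q hpq => ?_⟩
  · simp only [hstab]
    simpa using encard_setOf_eq_or_snd_ne p
  · obtain ⟨hne, hsnd⟩ := not_or.1 (mt (hstab p q).2 hpq)
    exact existsUnique_prodOp_eq hne (not_not.1 hsnd) (hqg p.1 q.1)

end

/-- For a finite nonempty quasigroup quandle `X` and `n ≥ 1`, the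
operation `◦` on `X × T_n` makes it a quandle, and it is an
`((n-1)|X|+1)`-almost quasigroup quandle. -/
theorem prod_quasigroup_trivial_is_mAQ
    {X : Type*} [Fintype X] [DecidableEq X] [Nonempty X] (op : X → X → X)
    (hidem : ∀ a : X, op a a = a)
    (hbij : ∀ b : X, Function.Bijective fun x => op x b)
    (hdist : ∀ a b c : X, op (op a b) c = op (op a c) (op b c))
    (hqg : ∀ a b : X, ∃! x : X, op a x = b)
    (n : ℕ) (hn : 1 ≤ n) :
    (∀ p : X × Fin n, prodOp op n p p = p) ∧
    (∀ q : X × Fin n, Function.Bijective fun p => prodOp op n p q) ∧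
    (∀ p q r : X × Fin n,
      prodOp op n (prodOp op n p q) r
        = prodOp op n (prodOp op n p r) (prodOp op n q r)) ∧
    (∀ p : X × Fin n,
      (Finset.univ.filter fun q => prodOp op n p q = p).card
        = (n - 1) * Fintype.card X + 1) ∧
    (∀ p q : X × Fin n, prodOp op n p q ≠ p → ∃! r : X × Fin n, prodOp op n p r = q) := by
  obtain ⟨hself, hbij', hdist', hcard, hsol⟩ :=
    prod_quasigroup_trivial_is_mAQ_general op hidem hbij hdist hqg n
  refine ⟨hself, hbij', hdist', fun p => ?_, hsol⟩
  rw [← ENat.natCast_inj, ← Set.encard_coe_eq_coe_finsetCard]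
  simpa using hcard p
end

section
/- Let n ≥ 2 and let Q be the set of transpositions (2-cycles) in the symmetric group S_n with the conjugation operation σ * τ = τ⁻¹στ. Then Q is a quandle; for transpositions σ = (i,j) and τ = (k,l) one has σ * τ = σ if and only if {i,j} = {k,l} or {i,j} ∩ {k,l} = ∅; and Q is an (C(n−2,2)+1)-almost quasigroup quandle, where C(n−2,2) denotes the binomial coefficient (n−2 choose 2). -/
/-- The conjugation quandle operation `σ * τ = τ⁻¹στ` on the set of
transpositions of `S_n`. -/
def transpositionConjOp (n : ℕ)
    (σ τ : {f : Equiv.Perm (Fin n) // f.IsSwap}) :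
    {f : Equiv.Perm (Fin n) // f.IsSwap} :=
  ⟨τ.1⁻¹ * σ.1 * τ.1, by
    obtain ⟨x, y, hxy, hσ⟩ := σ.2
    refine ⟨τ.1⁻¹ x, τ.1⁻¹ y, fun h => hxy (τ.1⁻¹.injective h), ?_⟩
    rw [hσ, Equiv.swap_apply_apply, inv_inv]⟩

/-!
Two distinct transpositions either have disjoint supports, and then commute, or have the form
`(a b)` and `(a c)` with `a`, `b`, `c` distinct, and then do not commute. Hence the stabilizer of
`σ` consists of `σ` and of the transpositions of the complement of its support. In the second case
a transposition `ρ` conjugating `(a b)` to `(a c)` must send `b` to `c`, so `ρ = (b c)`: otherwise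
it sends `a` to `c` and `b` to `a`, which no involution does as `b ≠ c`.
-/

section Swap

open Equiv Equiv.Perm

variable {α : Type*} [DecidableEq α]

theorem swap_eq_swap_iff {a b c d : α} (hab : a ≠ b) :
    swap a b = swap c d ↔ ({a, b} : Set α) = {c, d} := by
  rw [Set.pair_eq_pair_iff]
  constructor
  · intro h
    have hb : swap c d a = b := by rw [← h, swap_apply_left]
    grind
  · rintro (⟨rfl, rfl⟩ | ⟨rfl, rfl⟩)
    · rfl
    · exact swap_comm a b

theorem inv_mul_swap_mul (f : Perm α) (a b : α) :
    f⁻¹ * swap a b * f = swap (f⁻¹ a) (f⁻¹ b) := by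
  rw [swap_apply_apply, inv_inv]

theorem isSwap_inv_mul_mul {f : Perm α} (hf : f.IsSwap) (g : Perm α) :
    (g⁻¹ * f * g).IsSwap := by
  obtain ⟨a, b, hab, rfl⟩ := hf
  exact ⟨g⁻¹ a, g⁻¹ b, g⁻¹.injective.ne hab, inv_mul_swap_mul g a b⟩

theorem inv_eq_self_of_isSwap {f : Perm α} (hf : f.IsSwap) : f⁻¹ = f := by
  obtain ⟨a, b, -, rfl⟩ := hf
  exact swap_inv a b

theorem eq_swap_apply_of_isSwap {f : Perm α} (hf : f.IsSwap) {x : α} (hx : f x ≠ x) :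
    f = swap x (f x) :=
  hf.isCycle.eq_swap_of_apply_apply_eq_self hx <| by
    rw [← eq_inv_iff_eq, inv_eq_self_of_isSwap hf]

theorem disjoint_swap_swap_iff {i j k l : α} (hij : i ≠ j) (hkl : k ≠ l) :
    (swap i j).Disjoint (swap k l) ↔ ({i, j} : Set α) ∩ {k, l} = ∅ := by
  have moved {a b : α} (hab : a ≠ b) (x : α) : swap a b x = x ↔ x ∉ ({a, b} : Set α) := by
    rw [← not_ne_iff, swap_apply_ne_self_iff, Set.mem_insert_iff, Set.mem_singleton_iff,
      and_iff_right hab]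
  simp only [Perm.Disjoint, moved hij, moved hkl, Set.eq_empty_iff_forall_notMem, Set.mem_inter_iff,
    not_and_or]

theorem exists_eq_swap_of_not_disjoint {σ τ : Perm α} (hσ : σ.IsSwap) (hτ : τ.IsSwap)
    (hne : σ ≠ τ) (hdisj : ¬ σ.Disjoint τ) :
    ∃ a b c : α, a ≠ b ∧ a ≠ c ∧ b ≠ c ∧ σ = swap a b ∧ τ = swap a c := by
  obtain ⟨a, ha⟩ := not_forall.1 hdisj
  obtain ⟨hσa, hτa⟩ := not_or.1 ha
  have hσ_eq := eq_swap_apply_of_isSwap hσ hσa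
  have hτ_eq := eq_swap_apply_of_isSwap hτ hτa
  exact ⟨a, σ a, τ a, Ne.symm hσa, Ne.symm hτa, fun h => hne (by rw [hσ_eq, h, ← hτ_eq]),
    hσ_eq, hτ_eq⟩

theorem inv_mul_mul_eq_self_iff_eq_or_disjoint {σ τ : Perm α} (hσ : σ.IsSwap) (hτ : τ.IsSwap) :
    τ⁻¹ * σ * τ = σ ↔ σ = τ ∨ σ.Disjoint τ := by
  constructor
  · intro h
    by_contra! ⟨hne, hdisj⟩
    obtain ⟨a, b, c, hab, hac, hbc, rfl, rfl⟩ := exists_eq_swap_of_not_disjoint hσ hτ hne hdisj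
    have hcb : swap c b = swap a b := by
      rwa [inv_mul_swap_mul, swap_inv, swap_apply_left, swap_apply_of_ne_of_ne hab.symm hbc] at h
    exact hac (swap_injective_of_right b hcb).symm
  · rintro (rfl | hdisj)
    · simp
    · rw [mul_assoc, hdisj.commute.eq, inv_mul_cancel_left]

theorem swap_inv_mul_swap_mul_swap_eq_self_iff {i j k l : α} (hij : i ≠ j) (hkl : k ≠ l) :
    (swap k l)⁻¹ * swap i j * swap k l = swap i j ↔
      ({i, j} : Set α) = {k, l} ∨ ({i, j} : Set α) ∩ {k, l} = ∅ := by
  rw [inv_mul_mul_eq_self_iff_eq_or_disjoint ⟨i, j, hij, rfl⟩ ⟨k, l, hkl, rfl⟩,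
    swap_eq_swap_iff hij, disjoint_swap_swap_iff hij hkl]

theorem inv_mul_swap_mul_eq_swap_iff {a b c : α} (hab : a ≠ b) (hac : a ≠ c) (hbc : b ≠ c)
    {ρ : Perm α} (hρ : ρ.IsSwap) :
    ρ⁻¹ * swap a b * ρ = swap a c ↔ ρ = swap b c := by
  constructor
  · rw [inv_mul_swap_mul, inv_eq_self_of_isSwap hρ, swap_eq_swap_iff (ρ.injective.ne hab),
      Set.pair_eq_pair_iff]
    rintro (⟨-, hb⟩ | ⟨ha, hb⟩)
    · simpa only [hb] using eq_swap_apply_of_isSwap hρ (x := b) (hb ▸ hbc.symm)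
    · have hc : ρ c = a := by rw [← ha, ← eq_inv_iff_eq, inv_eq_self_of_isSwap hρ]
      exact absurd (ρ.injective (hb.trans hc.symm)) hbc
  · rintro rfl
    rw [inv_mul_swap_mul, swap_inv, swap_apply_of_ne_of_ne hab hac, swap_apply_left]

theorem bijOn_support_powersetCard_two [Fintype α] (s : Finset α) :
    Set.BijOn support {f : Perm α | f.IsSwap ∧ f.support ⊆ s} (s.powersetCard 2) := by
  refine ⟨?_, ?_, ?_⟩
  · rintro f ⟨hf, hfs⟩
    exact Finset.mem_powersetCard.2 ⟨hfs, card_support_eq_two.2 hf⟩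
  · rintro _ ⟨⟨a, b, hab, rfl⟩, -⟩ _ ⟨⟨c, d, hcd, rfl⟩, -⟩ h
    rw [support_swap hab, support_swap hcd] at h
    have hpair : ({a, b} : Set α) = {c, d} := by
      simpa only [Finset.coe_pair] using congrArg (fun t : Finset α => (t : Set α)) h
    exact (swap_eq_swap_iff hab).2 hpair
  · intro t ht
    obtain ⟨hts, hcard⟩ := Finset.mem_powersetCard.1 ht
    obtain ⟨a, b, hab, rfl⟩ := Finset.card_eq_two.1 hcard
    exact ⟨swap a b, ⟨⟨a, b, hab, rfl⟩, by rwa [support_swap hab]⟩, support_swap hab⟩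

theorem ncard_isSwap_support_subset [Fintype α] (s : Finset α) :
    {f : Perm α | f.IsSwap ∧ f.support ⊆ s}.ncard = s.card.choose 2 := by
  rw [(bijOn_support_powersetCard_two s).ncard_eq, Set.ncard_coe_finset, Finset.card_powersetCard]

end Swap

/-- The transpositions of a type, the underlying set of the quandle. It is a reducible synonym, so
that `Transposition (Fin n)` is literally the carrier of `transpositionConjOp n`. -/
abbrev Transposition (α : Type*) [DecidableEq α] : Type _ :=
  {f : Equiv.Perm α // f.IsSwap}

namespace Transposition

open Equiv Equiv.Perm

variable {α : Type*} [DecidableEq α]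

/-- The conjugation quandle operation `σ * τ = τ⁻¹στ` on the transpositions of an arbitrary type;
for `Fin n` it is definitionally `transpositionConjOp n`. -/
def conj (σ τ : Transposition α) : Transposition α :=
  ⟨τ.1⁻¹ * σ.1 * τ.1, isSwap_inv_mul_mul σ.2 τ.1⟩

theorem conj_self (σ : Transposition α) : conj σ σ = σ :=
  Subtype.ext (by simp [conj])

theorem conj_right_involutive (τ : Transposition α) :
    Function.Involutive fun σ => conj σ τ := by
  intro σ
  apply Subtype.ext
  calc τ.1⁻¹ * (τ.1⁻¹ * σ.1 * τ.1) * τ.1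
      = τ.1⁻¹ * (τ.1 * σ.1 * τ.1⁻¹) * τ.1 := by rw [inv_eq_self_of_isSwap τ.2]
    _ = σ.1 := by group

theorem conj_right_distrib (σ τ ρ : Transposition α) :
    conj (conj σ τ) ρ = conj (conj σ ρ) (conj τ ρ) := by
  apply Subtype.ext
  simp only [conj]
  group

theorem conj_eq_self_iff {σ τ : Transposition α} :
    conj σ τ = σ ↔ σ = τ ∨ σ.1.Disjoint τ.1 := by
  rw [Subtype.ext_iff, Subtype.ext_iff]
  exact inv_mul_mul_eq_self_iff_eq_or_disjoint σ.2 τ.2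

theorem image_stabilizer [Fintype α] (σ : Transposition α) :
    Subtype.val '' {τ : Transposition α | conj σ τ = σ} =
      insert σ.1 {f : Perm α | f.IsSwap ∧ f.support ⊆ σ.1.supportᶜ} := by
  ext f
  simp only [Set.mem_image, Set.mem_ofPred_eq, Set.mem_insert_iff, conj_eq_self_iff,
    disjoint_iff_disjoint_support, le_compl_iff_disjoint_left]
  constructor
  · rintro ⟨τ, rfl | hdisj, rfl⟩
    · exact Or.inl rfl
    · exact Or.inr ⟨τ.2, hdisj⟩
  · rintro (rfl | ⟨hf, hdisj⟩)
    · exact ⟨σ, Or.inl rfl, rfl⟩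
    · exact ⟨⟨f, hf⟩, Or.inr hdisj, rfl⟩

theorem ncard_stabilizer [Finite α] (σ : Transposition α) :
    {τ : Transposition α | conj σ τ = σ}.ncard = (Nat.card α - 2).choose 2 + 1 := by
  have := Fintype.ofFinite α
  have hσ : σ.1.support.card = 2 := card_support_eq_two.2 σ.2
  have hσ_notMem : σ.1 ∉ {f : Perm α | f.IsSwap ∧ f.support ⊆ σ.1.supportᶜ} := by
    rintro ⟨-, hsub⟩
    have hempty : σ.1.support = ∅ := by simpa using le_compl_iff_disjoint_left.1 hsub
    simp [hempty] at hσ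
  rw [← Set.ncard_image_of_injective _ Subtype.val_injective, image_stabilizer,
    Set.ncard_insert_of_notMem hσ_notMem, ncard_isSwap_support_subset, Finset.card_compl, hσ,
    Nat.card_eq_fintype_card]

theorem existsUnique_conj_eq {σ τ : Transposition α} (h : conj σ τ ≠ σ) :
    ∃! ρ, conj σ ρ = τ := by
  obtain ⟨hne, hdisj⟩ := not_or.1 (mt conj_eq_self_iff.2 h)
  obtain ⟨a, b, c, hab, hac, hbc, hσ, hτ⟩ :=
    exists_eq_swap_of_not_disjoint σ.2 τ.2 (mt Subtype.ext hne) hdisj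
  have conj_eq_iff (ρ : Transposition α) : conj σ ρ = τ ↔ ρ = ⟨swap b c, b, c, hbc, rfl⟩ := by
    rw [Subtype.ext_iff, Subtype.ext_iff, hτ, ← inv_mul_swap_mul_eq_swap_iff hab hac hbc ρ.2, ← hσ]
    rfl
  simp only [conj_eq_iff, existsUnique_eq]

end Transposition

open Transposition in
theorem transposition_quandle_is_mAQ_general {α : Type*} [DecidableEq α] :
    (∀ σ : Transposition α, conj σ σ = σ) ∧
    (∀ τ : Transposition α, Function.Bijective fun σ => conj σ τ) ∧
    (∀ σ τ ρ : Transposition α, conj (conj σ τ) ρ = conj (conj σ ρ) (conj τ ρ)) ∧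
    (∀ i j k l : α, i ≠ j → k ≠ l →
      ((Equiv.swap k l)⁻¹ * Equiv.swap i j * Equiv.swap k l = Equiv.swap i j ↔
        ({i, j} : Set α) = {k, l} ∨ ({i, j} : Set α) ∩ {k, l} = ∅)) ∧
    (Finite α → ∀ σ : Transposition α,
      {τ : Transposition α | conj σ τ = σ}.ncard = (Nat.card α - 2).choose 2 + 1) ∧
    (∀ σ τ : Transposition α, conj σ τ ≠ σ → ∃! ρ, conj σ ρ = τ) :=
  ⟨conj_self, fun τ => (conj_right_involutive τ).bijective, conj_right_distrib,
    fun _ _ _ _ => swap_inv_mul_swap_mul_swap_eq_self_iff, fun _ => ncard_stabilizer,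
    fun _ _ => existsUnique_conj_eq⟩

/-- For `n ≥ 2`, the set `Q` of transpositions of `S_n` with
`σ * τ = τ⁻¹στ` is a quandle; `(i,j) * (k,l) = (i,j)` iff `{i,j} = {k,l}` or
`{i,j} ∩ {k,l} = ∅`; and `Q` is a `(C(n-2,2)+1)`-almost quasigroup quandle. -/
theorem transposition_quandle_is_mAQ (n : ℕ) (hn : 2 ≤ n) :
    (∀ σ : {f : Equiv.Perm (Fin n) // f.IsSwap},
      transpositionConjOp n σ σ = σ) ∧
    (∀ τ : {f : Equiv.Perm (Fin n) // f.IsSwap},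
      Function.Bijective fun σ => transpositionConjOp n σ τ) ∧
    (∀ σ τ ρ : {f : Equiv.Perm (Fin n) // f.IsSwap},
      transpositionConjOp n (transpositionConjOp n σ τ) ρ
        = transpositionConjOp n (transpositionConjOp n σ ρ)
            (transpositionConjOp n τ ρ)) ∧
    (∀ i j k l : Fin n, i ≠ j → k ≠ l →
      ((Equiv.swap k l)⁻¹ * Equiv.swap i j * Equiv.swap k l = Equiv.swap i j ↔
        ({i, j} : Set (Fin n)) = {k, l} ∨
        ({i, j} : Set (Fin n)) ∩ {k, l} = ∅)) ∧
    (∀ σ : {f : Equiv.Perm (Fin n) // f.IsSwap},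
      Set.ncard {τ : {f : Equiv.Perm (Fin n) // f.IsSwap} |
          transpositionConjOp n σ τ = σ}
        = Nat.choose (n - 2) 2 + 1) ∧
    (∀ σ τ : {f : Equiv.Perm (Fin n) // f.IsSwap},
      transpositionConjOp n σ τ ≠ σ →
        ∃! ρ : {f : Equiv.Perm (Fin n) // f.IsSwap},
          transpositionConjOp n σ ρ = τ) := by
  obtain ⟨idem, bij, distrib, fixed, stab, unique⟩ :=
    transposition_quandle_is_mAQ_general (α := Fin n)
  rw [Nat.card_fin] at stab
  exact ⟨idem, bij, distrib, fixed, stab inferInstance, unique⟩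
end

section
/- Let X be a finite m-almost quasigroup quandle such that for each a ∈ X the stabilizer S_a is a trivial subquandle of X. Then for each n ≥ 1 and each 1 ≤ j ≤ n, the chain maps (|X|−m)·g_1^j and (|X|−m)·g_2^j on the rack chain complex C_*^R(X) are chain homotopic; in particular they induce equal maps on the rack homology H_n^R(X). -/
/-- The stabilizer `S_a = {x | a * x = a}` as a finset. -/
def stabF {X : Type} [Fintype X] [DecidableEq X] (op : X → X → X) (a : X) :
    Finset X :=
  Finset.univ.filter fun y => op a y = a

/-- The chain map `g_1^j` (`j` is 1-based, `1 ≤ j ≤ n`; zero otherwise):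
`g_1^j(x) = Σ_{k ∈ S_{x_j}} (k, …, k, x_j, x_{j+1}, …, x_n)`
(the first `j-1` entries equal `k`). -/
def g1map {X : Type} [Fintype X] [DecidableEq X] (op : X → X → X) (n j : ℕ) :
    RackChain X n →+ RackChain X n :=
  FreeAbelianGroup.lift fun x =>
    if h : 1 ≤ j ∧ j ≤ n then
      ∑ k ∈ stabF op (x ⟨j - 1, by omega⟩),
        FreeAbelianGroup.of (fun i : Fin n => if (i : ℕ) < j - 1 then k else x i)
    else 0

/-- The chain map `g_2^j` (`j` is 1-based, `1 ≤ j ≤ n`; zero otherwise):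
`g_2^j(x) = Σ_{k ∈ S_{x_j}} (k, …, k, x_{j+1}, …, x_n)`
(the first `j` entries equal `k`). -/
def g2map {X : Type} [Fintype X] [DecidableEq X] (op : X → X → X) (n j : ℕ) :
    RackChain X n →+ RackChain X n :=
  FreeAbelianGroup.lift fun x =>
    if h : 1 ≤ j ∧ j ≤ n then
      ∑ k ∈ stabF op (x ⟨j - 1, by omega⟩),
        FreeAbelianGroup.of (fun i : Fin n => if (i : ℕ) < j then k else x i)
    else 0

/-- The chain map `g_0^j` (`j` is 1-based, `1 ≤ j ≤ n`; zero otherwise):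
`g_0^j(x) = Σ_{k ∈ S_{x_j}} (x_j, …, x_j, k, x_{j+1}, …, x_n)`
(the first `j-1` entries equal `x_j`, the `j`-th entry is `k`). -/
def g0map {X : Type} [Fintype X] [DecidableEq X] (op : X → X → X) (n j : ℕ) :
    RackChain X n →+ RackChain X n :=
  FreeAbelianGroup.lift fun x =>
    if h : 1 ≤ j ∧ j ≤ n then
      ∑ k ∈ stabF op (x ⟨j - 1, by omega⟩),
        FreeAbelianGroup.of (fun i : Fin n =>
          if (i : ℕ) < j - 1 then x ⟨j - 1, by omega⟩
          else if (i : ℕ) = j - 1 then k else x i)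
    else 0

/-- The symmetrizer chain map `g_s^j` (`j` is 1-based):
`g_s^j(x) = Σ_{y ∈ X} (y, …, y, x_{j+1}, …, x_n)` (the first `j` entries equal `y`). -/
def gsmap {X : Type} [Fintype X] [DecidableEq X] (op : X → X → X) (n j : ℕ) :
    RackChain X n →+ RackChain X n :=
  FreeAbelianGroup.lift fun x =>
    ∑ y : X, FreeAbelianGroup.of (fun i : Fin n => if (i : ℕ) < j then y else x i)

/-!
The problem lives in degrees two and three. For a fixed `a` and `c ∈ S_a`, the 3-chain
`∑ y, (c, y, a) + (c, c, y)` has boundary `|X| Q c - ∑ y, Q (c * y)`, where `Q c = (c, a) - (c, c)`.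
Since `S_a` is trivial, `S_c = S_a`, so the almost quasigroup property says that `y ↦ c * y` and
`y ↦ a * y` take each value outside `S_a` once and the value `c`, resp. `a`, exactly `m` times.
As `Q a = 0`, subtracting the chain for `c = a` and summing over `c ∈ S_a` gives a 3-chain
with boundary `(|X| - m) ∑ c ∈ S_a, (c, a) - (c, c)`.

For `a = x_j`, this 3-chain is grafted onto an arbitrary tuple `x` by repeating its first entry
`j - 1` times. The faces inside the repeated block cancel by idempotency, the next two faces
assemble to the boundary of the 3-chain, and the remaining ones are the faces of `x`; as the 3-chain
is natural in `a` under right translations, this makes the graft a chain homotopy.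
-/

open Finset
open FreeAbelianGroup (of lift_apply_of lift_ext map_of_apply)

section Stabilizer

variable {X : Type} [Fintype X] [DecidableEq X] {op : X → X → X}

theorem mem_stabF {a y : X} : y ∈ stabF op a ↔ op a y = a := by
  simp only [stabF, mem_filter, mem_univ, true_and]

theorem stabF_eq_of_mem {a k : X} (haa : op a a = a)
    (htriv : ∀ a x y, op a x = a → op a y = a → op x y = x) (hk : k ∈ stabF op a) :
    stabF op k = stabF op a := by
  have hka : op k a = k := htriv a k a (mem_stabF.1 hk) haa
  ext y
  rw [mem_stabF, mem_stabF]
  exact ⟨htriv k a y hka, htriv a k y (mem_stabF.1 hk)⟩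

theorem sum_stabF_op {A : Type*} [AddCommMonoid A] {z : X}
    (hbij : Function.Bijective fun x => op x z)
    (hdist : ∀ a b c, op (op a b) c = op (op a c) (op b c)) (a : X) (f : X → A) :
    ∑ k ∈ stabF op (op a z), f k = ∑ k ∈ stabF op a, f (op k z) := by
  refine (sum_equiv (Equiv.ofBijective _ hbij) (fun k => ?_) fun _ _ => rfl).symm
  rw [mem_stabF, mem_stabF, Equiv.ofBijective_apply, ← hdist]
  exact hbij.injective.eq_iff.symm

theorem sum_compl_stabF_comp_op {A : Type*} [AddCommMonoid A] {a : X} (haa : op a a = a)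
    (hsol : ∀ b, op a b ≠ a → ∃ x, op a x = b) (f : X → A) :
    ∑ y ∈ (stabF op a)ᶜ, f (op a y) = ∑ b ∈ (stabF op a)ᶜ, f b := by
  have subset_image : (stabF op a)ᶜ ⊆ ((stabF op a)ᶜ).image (op a) := by
    intro b hb
    rw [mem_compl, mem_stabF] at hb
    obtain ⟨y, rfl⟩ := hsol b hb
    refine mem_image_of_mem _ (mem_compl.2 fun hy => hb ?_)
    rw [mem_stabF.1 hy, haa]
  have image_eq : ((stabF op a)ᶜ).image (op a) = (stabF op a)ᶜ :=
    (eq_of_subset_of_card_le subset_image card_image_le).symm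
  have injOn : Set.InjOn (op a) (stabF op a)ᶜ :=
    mod_cast card_image_iff.1 (congrArg card image_eq)
  rw [← sum_image (mod_cast injOn), image_eq]

theorem sum_comp_op {A : Type*} [AddCommMonoid A] {a : X} (haa : op a a = a)
    (hsol : ∀ b, op a b ≠ a → ∃ x, op a x = b) (f : X → A) :
    ∑ y, f (op a y) = #(stabF op a) • f a + ∑ b ∈ (stabF op a)ᶜ, f b := by
  rw [← sum_add_sum_compl (stabF op a), sum_compl_stabF_comp_op haa hsol]
  congr 1
  exact sum_eq_card_nsmul fun y hy => congrArg f (mem_stabF.1 hy)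

end Stabilizer

theorem rackBoundary_of {X : Type} (op : X → X → X) (n : ℕ) (x : Fin (n + 1) → X) :
    rackBoundary op n (of x) =
      ∑ i : Fin (n + 1), (-1 : ℤ) ^ ((i : ℕ) + 1) • (of (dZero n i x) - of (dStar op n i x)) :=
  lift_apply_of _ _

theorem dStar_zero {X : Type} (op : X → X → X) {n : ℕ} (x : Fin (n + 1) → X) :
    dStar op n 0 x = dZero n 0 x :=
  rfl

-- Lets each face computation be done once, for `dStar`.
theorem dZero_eq_dStar {X : Type} (n : ℕ) (i : Fin (n + 1)) (x : Fin (n + 1) → X) :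
    dZero n i x = dStar (fun a _ => a) n i x :=
  rfl

theorem dStar_two_one {X : Type} (op : X → X → X) (t : Fin 3 → X) :
    dStar op 2 1 t = ![op (t 0) (t 1), t 2] := by
  ext j
  fin_cases j <;> rfl

theorem dStar_two_two {X : Type} (op : X → X → X) (t : Fin 3 → X) :
    dStar op 2 2 t = ![op (t 0) (t 2), op (t 1) (t 2)] := by
  ext j
  fin_cases j <;> rfl

theorem rackBoundary_two_of {X : Type} (op : X → X → X) (t : Fin 3 → X) :
    rackBoundary op 2 (of t) =
      of (dZero 2 1 t) - of (dStar op 2 1 t) - (of (dZero 2 2 t) - of (dStar op 2 2 t)) := by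
  have sign_one : (-1 : ℤ) ^ (((1 : Fin 3) : ℕ) + 1) = 1 := rfl
  have sign_two : (-1 : ℤ) ^ (((2 : Fin 3) : ℕ) + 1) = -1 := rfl
  rw [rackBoundary_of, Fin.sum_univ_three, dStar_zero, sub_self, smul_zero, zero_add, sign_one,
    sign_two, one_smul, neg_one_smul, ← sub_eq_add_neg]

section FillingChain

variable {X : Type} (op : X → X → X)

theorem rackBoundary_of_triple (c u v : X) :
    rackBoundary op 2 (of ![c, u, v]) =
      of ![c, v] - of ![op c u, v] - (of ![c, u] - of ![op c v, op u v]) := by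
  simp only [rackBoundary_two_of, dZero_eq_dStar, dStar_two_one, dStar_two_two, Matrix.cons_val]

/-- The right translation by `z`, acting on all entries of a tuple, as an endomorphism of the rack
chain groups. -/
def rackTranslate (z : X) {n : ℕ} : RackChain X n →+ RackChain X n :=
  FreeAbelianGroup.map fun t i => op (t i) z

theorem rackTranslate_of_triple (z c u v : X) :
    rackTranslate op z (of ![c, u, v]) = of ![op c z, op u z, op v z] := by
  rw [rackTranslate, map_of_apply]
  congr 1
  ext i
  fin_cases i <;> rfl

variable [Fintype X]

/-- The 3-chain `∑ y, (c, y, a) + (c, c, y)`, whose boundary compares `(c, a) - (c, c)` with its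
images under `c ↦ c * y`. -/
def averagingChain (a c : X) : RackChain X 3 :=
  ∑ y, (of ![c, y, a] + of ![c, c, y])

variable {op} in
theorem rackBoundary_averagingChain (hidem : ∀ a, op a a = a) {a c : X}
    (hbij : Function.Bijective fun x => op x a) (hca : op c a = c) :
    rackBoundary op 2 (averagingChain a c) =
      Fintype.card X • (of ![c, a] - of ![c, c])
        - ∑ y, (of ![op c y, a] - of ![op c y, op c y]) := by
  have sum_op_right : ∑ y, of ![c, op y a] = ∑ y, of ![c, y] :=
    hbij.sum_comp fun y => of ![c, y]
  simp only [averagingChain, map_sum, map_add, rackBoundary_of_triple, hidem, hca,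
    sum_add_distrib, sum_sub_distrib, sum_op_right, sum_const, card_univ, smul_sub]
  abel

variable {op} in
theorem rackTranslate_averagingChain {z : X} (hbij : Function.Bijective fun x => op x z) (a c : X) :
    rackTranslate op z (averagingChain a c) = averagingChain (op a z) (op c z) := by
  simp only [averagingChain, map_sum, map_add, rackTranslate_of_triple]
  exact hbij.sum_comp fun y => of ![op c z, y, op a z] + of ![op c z, op c z, y]

variable [DecidableEq X]

/-- The 3-chain that bounds `(|X| - |S_a|) ∑ k ∈ S_a, (k, a) - (k, k)`. -/
def fillingChain (a : X) : RackChain X 3 :=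
  ∑ k ∈ stabF op a, (averagingChain a k - averagingChain a a)

variable {op}

theorem rackTranslate_fillingChain {z : X} (hbij : Function.Bijective fun x => op x z)
    (hdist : ∀ a b c, op (op a b) c = op (op a c) (op b c)) (a : X) :
    rackTranslate op z (fillingChain op a) = fillingChain op (op a z) := by
  simp only [fillingChain, map_sum, map_sub, rackTranslate_averagingChain hbij]
  exact (sum_stabF_op hbij hdist a fun k =>
    averagingChain (op a z) k - averagingChain (op a z) (op a z)).symm

theorem rackBoundary_fillingChain (hidem : ∀ a, op a a = a) {a : X}
    (hbij : Function.Bijective fun x => op x a)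
    (hsol : ∀ a b, op a b ≠ a → ∃ x, op a x = b)
    (htriv : ∀ a x y, op a x = a → op a y = a → op x y = x) :
    rackBoundary op 2 (fillingChain op a) =
      ((Fintype.card X : ℤ) - #(stabF op a)) •
        ∑ k ∈ stabF op a, (of ![k, a] - of ![k, k]) := by
  rw [fillingChain, map_sum, smul_sum]
  refine sum_congr rfl fun k hk => ?_
  have hka : op k a = k := htriv a k a (mem_stabF.1 hk) (hidem a)
  let Q : X → RackChain X 2 := fun c => of ![c, a] - of ![c, c]
  have sum_k : ∑ y, Q (op k y) = #(stabF op a) • Q k + ∑ b ∈ (stabF op a)ᶜ, Q b := by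
    rw [sum_comp_op (hidem k) (hsol k), stabF_eq_of_mem (hidem a) htriv hk]
  have sum_a : ∑ y, Q (op a y) = #(stabF op a) • Q a + ∑ b ∈ (stabF op a)ᶜ, Q b :=
    sum_comp_op (hidem a) (hsol a) Q
  have Q_a : Q a = 0 := sub_self _
  calc rackBoundary op 2 (averagingChain a k - averagingChain a a)
      = (Fintype.card X • Q k - ∑ y, Q (op k y))
          - (Fintype.card X • Q a - ∑ y, Q (op a y)) := by
        rw [map_sub, rackBoundary_averagingChain hidem hbij hka,
          rackBoundary_averagingChain hidem hbij (hidem a)]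
    _ = ((Fintype.card X : ℤ) - #(stabF op a)) • Q k := by
        rw [sum_k, sum_a, Q_a, sub_smul, natCast_zsmul, natCast_zsmul]
        simp only [smul_zero]
        abel

end FillingChain

theorem sum_univ_eq_add_sum_Ioi {A : Type*} [AddCommMonoid A] {n : ℕ} (p : Fin (n + 1))
    (f : Fin (n + 2) → A) (hf : ∀ i < p, f i.castSucc = 0) :
    ∑ i, f i = f p.castSucc + f p.succ + ∑ i ∈ Ioi p, f i.succ := by
  have below : ∀ i ∈ univ, i ∉ Ici p → f (p.castSucc.succAbove i) = 0 := fun i _ hi => by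
    have hip : i < p := not_le.1 (mt mem_Ici.2 hi)
    rw [Fin.succAbove_castSucc_of_lt _ _ hip, hf i hip]
  have above : ∀ i ∈ Ici p, f (p.castSucc.succAbove i) = f i.succ := fun i hi => by
    rw [Fin.succAbove_castSucc_of_le _ _ (mem_Ici.1 hi)]
  rw [Fin.sum_univ_succAbove f p.castSucc, ← sum_subset (subset_univ (Ici p)) below,
    sum_congr rfl above, Ici_eq_cons_Ioi, sum_cons, add_assoc]

section Graft

variable {X : Type}

/-- The tuple `(t₀, …, t₀, t₁, x_{p+1}, …)`, with `p` copies of `t₀` (entries of `x` are indexed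
from `0`). -/
def graftPair {n : ℕ} (p : ℕ) (x : Fin n → X) (t : Fin 2 → X) : Fin n → X :=
  fun i => if (i : ℕ) < p then t 0 else if (i : ℕ) = p then t 1 else x i

/-- The tuple `(t₀, …, t₀, t₁, t₂, x_{p+1}, …)`, with `p` copies of `t₀` (entries of `x` are indexed
from `0`). -/
def graftTriple {n : ℕ} (p : ℕ) (x : Fin n → X) (t : Fin 3 → X) : Fin (n + 1) → X :=
  fun i =>
    if (i : ℕ) < p then t 0
    else if (i : ℕ) = p then t 1
    else if h : (i : ℕ) ≤ p + 1 then t 2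
    else x ⟨i - 1, by omega⟩

variable (op : X → X → X) {n : ℕ}

theorem graftTriple_dStar_of_le {p : ℕ} {i : Fin (n + 1)} (hi : (i : ℕ) ≤ p)
    (x : Fin (n + 1) → X) : graftTriple p (dStar op n i x) = graftTriple p (dZero n i x) := by
  funext t j
  simp only [graftTriple, dStar, dZero]
  split_ifs <;> first | rfl | omega

variable (p : Fin (n + 1)) (x : Fin (n + 1) → X) (t : Fin 3 → X)

variable {op p} in
theorem dStar_graftTriple_castSucc_of_lt (hidem : ∀ a, op a a = a) {i : Fin (n + 1)} (hi : i < p) :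
    dStar op (n + 1) i.castSucc (graftTriple p x t) =
      dZero (n + 1) i.castSucc (graftTriple p x t) := by
  funext j
  simp only [dStar, dZero, graftTriple, Fin.val_castSucc]
  split_ifs <;> first | rfl | omega | exact hidem _

theorem dStar_graftTriple_castSucc_self :
    dStar op (n + 1) p.castSucc (graftTriple p x t) = graftPair p x (dStar op 2 1 t) := by
  rw [dStar_two_one]
  funext j
  simp only [dStar, graftTriple, graftPair, Fin.val_castSucc, Fin.val_succ, Matrix.cons_val]
  split_ifs <;> first | rfl | omega

theorem dStar_graftTriple_succ_self :
    dStar op (n + 1) p.succ (graftTriple p x t) = graftPair p x (dStar op 2 2 t) := by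
  rw [dStar_two_two]
  funext j
  simp only [dStar, graftTriple, graftPair, Fin.val_castSucc, Fin.val_succ, Matrix.cons_val]
  split_ifs <;> first | rfl | omega

variable {p} in
theorem dStar_graftTriple_succ_of_lt {i : Fin (n + 1)} (hi : p < i) :
    dStar op (n + 1) i.succ (graftTriple p x t) =
      graftTriple p (dStar op n i x) fun s => op (t s) (x i) := by
  funext j
  simp only [dStar, graftTriple, Fin.val_castSucc, Fin.val_succ, Fin.castSucc_mk, Fin.succ_mk]
  split_ifs <;> first | rfl | omega | exact congrArg x (Fin.ext (by dsimp only; omega))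

variable {op} in
theorem rackBoundary_of_graftTriple (hidem : ∀ a, op a a = a) :
    rackBoundary op (n + 1) (of (graftTriple p x t)) =
      (-1 : ℤ) ^ ((p : ℕ) + 1) • FreeAbelianGroup.map (graftPair p x) (rackBoundary op 2 (of t)) +
        ∑ i ∈ Ioi p, (-1 : ℤ) ^ (i : ℕ) •
          (of (graftTriple p (dZero n i x) t)
            - of (graftTriple p (dStar op n i x) fun s => op (t s) (x i))) := by
  have repeated : ∀ i < p, (-1 : ℤ) ^ ((i.castSucc : ℕ) + 1) •
      (of (dZero (n + 1) i.castSucc (graftTriple p x t))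
        - of (dStar op (n + 1) i.castSucc (graftTriple p x t))) = 0 := fun i hi => by
    rw [dStar_graftTriple_castSucc_of_lt x t hidem hi, sub_self, smul_zero]
  rw [rackBoundary_of, sum_univ_eq_add_sum_Ioi p _ repeated, rackBoundary_two_of]
  simp only [dZero_eq_dStar (n + 1), dZero_eq_dStar 2, dStar_graftTriple_castSucc_self,
    dStar_graftTriple_succ_self]
  congr 1
  · have sign : (-1 : ℤ) ^ ((p.succ : ℕ) + 1) = -(-1) ^ ((p : ℕ) + 1) := by
      rw [Fin.val_succ, pow_succ, mul_neg_one]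
    simp only [map_sub, map_of_apply, sign, neg_smul, Fin.val_castSucc, smul_sub]
    abel
  · refine sum_congr rfl fun i hi => ?_
    have hpi : p < i := mem_Ioi.1 hi
    rw [dStar_graftTriple_succ_of_lt _ x t hpi, dStar_graftTriple_succ_of_lt _ x t hpi,
      Fin.val_succ, pow_add _ _ 2, neg_one_sq, mul_one]
    rfl

variable {op} in
theorem rackBoundary_map_graftTriple (hidem : ∀ a, op a a = a) (τ : RackChain X 3) :
    rackBoundary op (n + 1) (FreeAbelianGroup.map (graftTriple p x) τ) =
      (-1 : ℤ) ^ ((p : ℕ) + 1) • FreeAbelianGroup.map (graftPair p x) (rackBoundary op 2 τ) +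
        ∑ i ∈ Ioi p, (-1 : ℤ) ^ (i : ℕ) •
          (FreeAbelianGroup.map (graftTriple p (dZero n i x)) τ
            - FreeAbelianGroup.map (graftTriple p (dStar op n i x))
                (rackTranslate op (x i) τ)) := by
  induction τ using FreeAbelianGroup.induction_on with
  | zero => simp only [map_zero, sub_zero, smul_zero, sum_const_zero, add_zero]
  | of t => simp only [map_of_apply, rackTranslate, rackBoundary_of_graftTriple p x t hidem]
  | neg t ht =>
    simp only [map_neg, ht, neg_add, ← smul_neg, ← sum_neg_distrib, neg_sub_neg, neg_sub]
  | add σ τ hσ hτ =>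
    simp only [map_add, hσ, hτ, add_sub_add_comm, smul_add, sum_add_distrib]
    abel

end Graft

section Homotopy

variable {X : Type} [Fintype X] [DecidableEq X] (op : X → X → X)

/-- The chain homotopy from `(|X| - m) g_2^{p+1}` to `(|X| - m) g_1^{p+1}`: up to sign, the filling
chain of `x p` grafted onto `x`. It is zero on tuples too short to have an entry `x p`. -/
def graftHomotopy (n p : ℕ) : RackChain X n →+ RackChain X (n + 1) :=
  FreeAbelianGroup.lift fun x =>
    if h : p < n then
      (-1 : ℤ) ^ (p + 1) • FreeAbelianGroup.map (graftTriple p x) (fillingChain op (x ⟨p, h⟩))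
    else 0

variable {op} {n : ℕ}

theorem graftHomotopy_of {p : ℕ} (h : p < n) (x : Fin n → X) :
    graftHomotopy op n p (of x) =
      (-1 : ℤ) ^ (p + 1) •
        FreeAbelianGroup.map (graftTriple p x) (fillingChain op (x ⟨p, h⟩)) := by
  rw [graftHomotopy, lift_apply_of, dif_pos h]

theorem graftHomotopy_dStar_of_le {p : ℕ} {i : Fin (n + 1)} (hi : (i : ℕ) ≤ p)
    (x : Fin (n + 1) → X) :
    graftHomotopy op n p (of (dStar op n i x)) = graftHomotopy op n p (of (dZero n i x)) := by
  by_cases h : p < n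
  · have entry_eq : dStar op n i x ⟨p, h⟩ = dZero n i x ⟨p, h⟩ := by
      simp only [dStar, dZero, if_neg hi.not_gt]
    rw [graftHomotopy_of h, graftHomotopy_of h, graftTriple_dStar_of_le op hi, entry_eq]
  · simp only [graftHomotopy, lift_apply_of, dif_neg h]

variable (p : Fin (n + 1)) (x : Fin (n + 1) → X)

theorem graftHomotopy_rackBoundary_of (hbij : ∀ b, Function.Bijective fun x => op x b)
    (hdist : ∀ a b c, op (op a b) c = op (op a c) (op b c)) :
    graftHomotopy op n p (rackBoundary op n (of x)) =
      (-1 : ℤ) ^ ((p : ℕ) + 1) • ∑ i ∈ Ioi p, (-1 : ℤ) ^ ((i : ℕ) + 1) •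
        (FreeAbelianGroup.map (graftTriple p (dZero n i x)) (fillingChain op (x p))
          - FreeAbelianGroup.map (graftTriple p (dStar op n i x))
              (rackTranslate op (x i) (fillingChain op (x p)))) := by
  have cancel : ∀ i ∈ univ, i ∉ Ioi p → (-1 : ℤ) ^ ((i : ℕ) + 1) •
      (graftHomotopy op n p (of (dZero n i x))
        - graftHomotopy op n p (of (dStar op n i x))) = 0 := fun i _ hi => by
    rw [graftHomotopy_dStar_of_le (not_lt.1 fun h => hi (mem_Ioi.2 h)), sub_self, smul_zero]
  simp only [rackBoundary_of, map_sum, map_zsmul, map_sub]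
  rw [← sum_subset (subset_univ (Ioi p)) cancel, smul_sum]
  refine sum_congr rfl fun i hi => ?_
  have hpi : (p : ℕ) < i := (mem_Ioi (a := p)).1 hi
  have hpn : (p : ℕ) < n := by omega
  have dZero_apply : dZero n i x ⟨p, hpn⟩ = x p := if_pos hpi
  have dStar_apply : dStar op n i x ⟨p, hpn⟩ = op (x p) (x i) := if_pos hpi
  rw [graftHomotopy_of hpn, graftHomotopy_of hpn, dZero_apply, dStar_apply,
    rackTranslate_fillingChain (hbij _) hdist, ← smul_sub, smul_comm]

theorem g1map_of :
    g1map op (n + 1) (p + 1) (of x) =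
      ∑ k ∈ stabF op (x p), of (graftPair p x ![k, x p]) := by
  simp only [g1map, lift_apply_of, Nat.add_sub_cancel]
  rw [dif_pos (by omega)]
  refine sum_congr rfl fun k _ => congrArg of (funext fun i => ?_)
  simp only [graftPair, Matrix.cons_val]
  split_ifs with hlt heq
  · rfl
  · rw [Fin.ext heq]
  · rfl

theorem g2map_of :
    g2map op (n + 1) (p + 1) (of x) = ∑ k ∈ stabF op (x p), of (graftPair p x ![k, k]) := by
  simp only [g2map, lift_apply_of, Nat.add_sub_cancel]
  rw [dif_pos (by omega)]
  refine sum_congr rfl fun k _ => congrArg of (funext fun i => ?_)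
  simp only [graftPair, Matrix.cons_val]
  split_ifs <;> first | rfl | omega

theorem map_graftPair_rackBoundary_fillingChain (hidem : ∀ a, op a a = a)
    (hbij : Function.Bijective fun y => op y (x p))
    (hsol : ∀ a b, op a b ≠ a → ∃ x, op a x = b)
    (htriv : ∀ a x y, op a x = a → op a y = a → op x y = x) :
    FreeAbelianGroup.map (graftPair p x) (rackBoundary op 2 (fillingChain op (x p))) =
      ((Fintype.card X : ℤ) - #(stabF op (x p))) •
        (g1map op (n + 1) (p + 1) (of x) - g2map op (n + 1) (p + 1) (of x)) := by
  rw [rackBoundary_fillingChain hidem hbij hsol htriv, map_zsmul, map_sum, g1map_of, g2map_of,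
    ← sum_sub_distrib]
  simp only [map_sub, map_of_apply]

theorem rackBoundary_graftHomotopy_of (hidem : ∀ a, op a a = a)
    (hbij : ∀ b, Function.Bijective fun x => op x b)
    (hdist : ∀ a b c, op (op a b) c = op (op a c) (op b c))
    (hsol : ∀ a b, op a b ≠ a → ∃ x, op a x = b)
    (htriv : ∀ a x y, op a x = a → op a y = a → op x y = x) :
    rackBoundary op (n + 1) (graftHomotopy op (n + 1) p (of x))
        + graftHomotopy op n p (rackBoundary op n (of x)) =
      ((Fintype.card X : ℤ) - #(stabF op (x p))) •
        (g1map op (n + 1) (p + 1) (of x) - g2map op (n + 1) (p + 1) (of x)) := by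
  have sign_sq : (-1 : ℤ) ^ ((p : ℕ) + 1) * (-1) ^ ((p : ℕ) + 1) = 1 := by
    rw [← mul_pow, neg_one_mul, neg_neg, one_pow]
  rw [graftHomotopy_of p.is_lt, map_zsmul, rackBoundary_map_graftTriple p x hidem, smul_add,
    smul_smul, sign_sq, one_smul,
    map_graftPair_rackBoundary_fillingChain p x hidem (hbij _) hsol htriv,
    graftHomotopy_rackBoundary_of p x hbij hdist, add_assoc, ← smul_add, ← sum_add_distrib]
  simp only [pow_succ, mul_neg_one, neg_smul, add_neg_cancel, sum_const_zero, smul_zero, add_zero]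

theorem rackBoundary_graftHomotopy_add {m : ℕ} (hidem : ∀ a, op a a = a)
    (hbij : ∀ b, Function.Bijective fun x => op x b)
    (hdist : ∀ a b c, op (op a b) c = op (op a c) (op b c))
    (hstab : ∀ a, #(stabF op a) = m)
    (hsol : ∀ a b, op a b ≠ a → ∃ x, op a x = b)
    (htriv : ∀ a x y, op a x = a → op a y = a → op x y = x) (c : RackChain X (n + 1)) :
    rackBoundary op (n + 1) (graftHomotopy op (n + 1) p c)
        + graftHomotopy op n p (rackBoundary op n c) =
      ((Fintype.card X : ℤ) - m) •
        (g1map op (n + 1) (p + 1) c - g2map op (n + 1) (p + 1) c) := by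
  have hom_eq : (rackBoundary op (n + 1)).comp (graftHomotopy op (n + 1) p)
        + (graftHomotopy op n p).comp (rackBoundary op n) =
      ((Fintype.card X : ℤ) - m) • (g1map op (n + 1) (p + 1) - g2map op (n + 1) (p + 1)) :=
    lift_ext _ _ fun x => by
      rw [← hstab (x p)]
      exact rackBoundary_graftHomotopy_of p x hidem hbij hdist hsol htriv
  exact DFunLike.congr_fun hom_eq c

end Homotopy

/-- For a finite `m`-almost quasigroup quandle `X` with all
stabilizers trivial subquandles, the chain maps `(|X|-m)·g_1^j` and
`(|X|-m)·g_2^j` are chain homotopic (for `1 ≤ j ≤ n`); in particular they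
induce equal maps on rack homology. -/
theorem mAQ_g1_g2_chain_homotopic
    {X : Type} [Fintype X] [DecidableEq X] (op : X → X → X) (m : ℕ)
    (hm : 1 ≤ m)
    (hidem : ∀ a : X, op a a = a)
    (hbij : ∀ b : X, Function.Bijective fun x => op x b)
    (hdist : ∀ a b c : X, op (op a b) c = op (op a c) (op b c))
    (hstab : ∀ a : X, (stabF op a).card = m)
    (hsol : ∀ a b : X, op a b ≠ a → ∃! x : X, op a x = b)
    (htriv : ∀ a x y : X, op a x = a → op a y = a → op x y = x) :
    ∀ (n j : ℕ), 1 ≤ j → j ≤ n + 1 →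
      (∃ (G : RackChain X (n + 1) →+ RackChain X (n + 2))
         (G' : RackChain X n →+ RackChain X (n + 1)),
        ∀ c : RackChain X (n + 1),
          rackBoundary op (n + 1) (G c) + G' (rackBoundary op n c)
            = ((Fintype.card X : ℤ) - (m : ℤ)) •
                (g1map op (n + 1) j c - g2map op (n + 1) j c)) ∧
      (∀ c ∈ (rackBoundary op n).ker,
        ∃ d : RackChain X (n + 2),
          rackBoundary op (n + 1) d
            = ((Fintype.card X : ℤ) - (m : ℤ)) •
                (g1map op (n + 1) j c - g2map op (n + 1) j c)) := by
  intro n j hj1 hjn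
  obtain ⟨p, rfl⟩ : ∃ p : Fin (n + 1), j = p + 1 :=
    ⟨⟨j - 1, by omega⟩, (Nat.sub_add_cancel hj1).symm⟩
  have homotopy := rackBoundary_graftHomotopy_add (n := n) p hidem hbij hdist hstab
    (fun a b hab => (hsol a b hab).exists) htriv
  refine ⟨⟨_, _, homotopy⟩, fun c hc => ⟨graftHomotopy op (n + 1) p c, ?_⟩⟩
  rw [← homotopy c, AddMonoidHom.mem_ker.1 hc, map_zero, add_zero]
end

section
/- Let X be a finite m-almost quasigroup quandle such that for each a ∈ X the stabilizer S_a is a trivial subquandle of X. For 2 ≤ j ≤ n define F_n^j : C_n^R(X) → C_{n+1}^R(X) on generators x = (x_1,…,x_n) by F_n^j(x) = Σ_{k=1}^m Σ_{y∈X} [ (x_j,…,x_j, y, x_j^{(k)}, x_{j+1},…,x_n) − (x_j^{(k)},…,x_j^{(k)}, y, x_j^{(k)}, x_{j+1},…,x_n) ], where in each tuple the first j−1 entries are equal (to x_j and x_j^{(k)} respectively). Then ∂_{n+1}∘F_n^j + F_{n−1}^j∘∂_n = (−1)^j(|X|−m)(g_0^j − g_2^j) as maps C_n^R(X) → C_n^R(X).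 -/
/-- The chain homotopy `F_n^j` (`j` 1-based, `2 ≤ j ≤ n`; zero otherwise):
`F_n^j(x) = Σ_{k ∈ S_{x_j}} Σ_{y ∈ X} [(x_j, …, x_j, y, k, x_{j+1}, …, x_n)
− (k, …, k, y, k, x_{j+1}, …, x_n)]` (first `j-1` entries equal). -/
def Fmap {X : Type} [Fintype X] [DecidableEq X] (op : X → X → X) (n j : ℕ) :
    RackChain X n →+ RackChain X (n + 1) :=
  FreeAbelianGroup.lift fun x =>
    if h : 2 ≤ j ∧ j ≤ n then
      ∑ k ∈ stabF op (x ⟨j - 1, by omega⟩), ∑ y : X,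
        (FreeAbelianGroup.of (fun i : Fin (n + 1) =>
            if (i : ℕ) < j - 1 then x ⟨j - 1, by omega⟩
            else if (i : ℕ) = j - 1 then y
            else if (i : ℕ) = j then k
            else x ⟨(i : ℕ) - 1, by have := i.isLt; omega⟩)
         - FreeAbelianGroup.of (fun i : Fin (n + 1) =>
            if (i : ℕ) < j - 1 then k
            else if (i : ℕ) = j - 1 then y
            else if (i : ℕ) = j then k
            else x ⟨(i : ℕ) - 1, by have := i.isLt; omega⟩))
    else 0

/-!
Let `p = j - 1` and let `H` be the operator inserting every `y ∈ X` in turn at position `p`, so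
that `F^j = H ∘ (g_0^j - g_2^j)`. Both `g_0^j` and `g_2^j` are chain maps, hence the left-hand side
is `(∂H + H∂) ∘ (g_0^j - g_2^j)`.

On a tuple `(u, …, u, k, …)` with `p` leading entries `u`, the faces in front of the inserted entry
vanish by idempotence, and those behind it cancel between `∂H` and `H∂` because `y ↦ y * z` permutes
`X`. Only the face deleting `y` itself survives, so `∂H + H∂` sends this tuple to
`(-1)^j (|X| (u, …, u, k, …) - Σ_y (u * y, …, u * y, k, …))`. Since `X` is an almost quasigroup, the
last sum is `|S_u| (u, …, u, k, …) + Σ_{b ∉ S_u} (b, …, b, k, …)`. Triviality of the stabilizers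
gives `S_k = S_a` for `k ∈ S_a`, so the sum over `b` drops out of the difference between the tuples
with `u = a` and `u = k` that make up `g_0^j - g_2^j`.
-/

namespace RackChain

section Tuples

variable {X : Type*} {n : ℕ}

theorem insertNth_castSucc_of_lt {p l : Fin n} (h : l < p) (y : X) (z : Fin n → X) :
    (p.castSucc.insertNth y z : Fin (n + 1) → X) l.castSucc = z l := by
  rw [← Fin.succAbove_castSucc_of_lt _ _ h, Fin.insertNth_apply_succAbove]

theorem insertNth_succ_of_le {p l : Fin n} (h : p ≤ l) (y : X) (z : Fin n → X) :
    (p.castSucc.insertNth y z : Fin (n + 1) → X) l.succ = z l := by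
  rw [← Fin.succAbove_castSucc_of_le _ _ h, Fin.insertNth_apply_succAbove]

/-- The tuple `(u, …, u, k, x_{p+1}, …)` with `p` leading entries `u`, positions being counted
from `0`. The paper's `j` is `p + 1`. -/
def prefixTuple (p : ℕ) (u k : X) (x : Fin n → X) : Fin n → X :=
  fun i => if (i : ℕ) < p then u else if (i : ℕ) = p then k else x i

theorem prefixTuple_of_lt {p : ℕ} {i : Fin n} (h : (i : ℕ) < p) (u k : X) (x : Fin n → X) :
    prefixTuple p u k x i = u :=
  if_pos h

theorem prefixTuple_congr {p : ℕ} {x x' : Fin n → X} (h : ∀ i : Fin n, p ≤ i → x i = x' i)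
    (u k : X) : prefixTuple p u k x = prefixTuple p u k x' := by
  funext i
  grind [prefixTuple]

theorem insertNth_prefixTuple (p : Fin n) (y u k : X) (x : Fin n → X) :
    p.castSucc.insertNth y (prefixTuple p u k x) = fun i : Fin (n + 1) =>
      if (i : ℕ) < p then u else if (i : ℕ) = p then y else if (i : ℕ) = p + 1 then k
      else x ⟨(i : ℕ) - 1, by have := p.isLt; have := i.isLt; omega⟩ := by
  refine Fin.insertNth_eq_iff.2 ⟨by simp, funext fun l => ?_⟩
  grind [Fin.removeNth, Fin.succAbove, prefixTuple]

end Tuples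

section Faces

variable {X : Type} (op : X → X → X) {n : ℕ}

/-- The signless `i`-th term `d_i^{(*_0)} - d_i^{(*)}` of the rack boundary. -/
def faceDiff (i : Fin (n + 1)) : RackChain X (n + 1) →+ RackChain X n :=
  FreeAbelianGroup.lift fun x =>
    FreeAbelianGroup.of (dZero n i x) - FreeAbelianGroup.of (dStar op n i x)

@[simp]
theorem faceDiff_of (i : Fin (n + 1)) (x : Fin (n + 1) → X) :
    faceDiff op i (.of x) = .of (dZero n i x) - .of (dStar op n i x) :=
  FreeAbelianGroup.lift_apply_of _ _

theorem rackBoundary_apply (c : RackChain X (n + 1)) :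
    rackBoundary op n c = ∑ i : Fin (n + 1), (-1 : ℤ) ^ ((i : ℕ) + 1) • faceDiff op i c := by
  suffices h : rackBoundary op n = ∑ i : Fin (n + 1), (-1 : ℤ) ^ ((i : ℕ) + 1) • faceDiff op i by
    simp [h]
  ext x
  simp [rackBoundary]

theorem faceDiff_of_eq_zero {i : Fin (n + 1)} {x : Fin (n + 1) → X}
    (h : ∀ j : Fin n, j.castSucc < i → op (x j.castSucc) (x i) = x j.castSucc) :
    faceDiff op i (.of x) = 0 := by
  have : dZero n i x = dStar op n i x := by
    funext j
    unfold dZero dStar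
    split_ifs with hj
    exacts [(h j hj).symm, rfl]
  rw [faceDiff_of, this, sub_self]

theorem dStar_insertNth (p : Fin (n + 1)) (y : X) (z : Fin n → X) (j : Fin n) :
    dStar op n p (p.insertNth y z) j = if j.castSucc < p then op (z j) y else z j := by
  have hz : (p.insertNth y z : Fin (n + 1) → X) (p.succAbove j) = z j :=
    Fin.insertNth_apply_succAbove ..
  rw [← hz, Fin.succAbove]
  change (if j.castSucc < p then _ else _) = _
  split_ifs <;> simp

theorem dZero_insertNth (p : Fin (n + 1)) (y : X) (z : Fin n → X) :
    dZero n p (p.insertNth y z) = z :=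
  funext fun j => (dStar_insertNth (fun a _ => a) p y z j).trans (ite_self _)

theorem dStar_succ_insertNth {p i : Fin (n + 1)} (h : p ≤ i) (y : X) (z : Fin (n + 1) → X) :
    dStar op (n + 1) i.succ (p.castSucc.insertNth y z) =
      p.insertNth (op y (z i)) (dStar op n i z) := by
  refine Fin.eq_insertNth_iff.2 ⟨?_, funext fun l => ?_⟩
  · simp [dStar, insertNth_succ_of_le h, Nat.lt_succ_of_le h]
  rcases lt_or_ge l.castSucc p with hl | hl
  · grind [Fin.removeNth, Fin.succAbove_of_castSucc_lt, dStar, insertNth_castSucc_of_lt,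
      insertNth_succ_of_le]
  · grind [Fin.removeNth, Fin.succAbove_of_le_castSucc, dStar, insertNth_succ_of_le]

theorem dZero_succ_insertNth {p i : Fin (n + 1)} (h : p ≤ i) (y : X) (z : Fin (n + 1) → X) :
    dZero (n + 1) i.succ (p.castSucc.insertNth y z) = p.insertNth y (dZero n i z) :=
  dStar_succ_insertNth (fun a _ => a) h y z

theorem dStar_prefixTuple {p : ℕ} {i : Fin (n + 1)} (h : p < i) (u k : X) (x : Fin (n + 1) → X) :
    dStar op n i (prefixTuple p u k x) =
      prefixTuple p (op u (x i)) (op k (x i)) (dStar op n i x) := by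
  funext l
  grind [dStar, prefixTuple]

theorem dZero_prefixTuple {p : ℕ} {i : Fin (n + 1)} (h : p < i) (u k : X) (x : Fin (n + 1) → X) :
    dZero n i (prefixTuple p u k x) = prefixTuple p u k (dZero n i x) :=
  dStar_prefixTuple (fun a _ => a) h u k x

variable {op}

theorem faceDiff_prefixTuple_eq_zero {p : ℕ} {i : Fin (n + 1)} (h : i ≤ p) {u k : X}
    (hu : op u u = u) (hk : op u k = u) (x : Fin (n + 1) → X) :
    faceDiff op i (.of (prefixTuple p u k x)) = 0 := by
  refine faceDiff_of_eq_zero op fun j hj => ?_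
  grind [prefixTuple]

end Faces

section InsertSum

variable {X : Type} [Fintype X] {op : X → X → X} {n : ℕ}

/-- The degree-one operator inserting every element of `X` in turn at position `p`:
`x ↦ Σ_y (x_0, …, x_{p-1}, y, x_p, …)`. -/
def insertSum (p : Fin (n + 1)) : RackChain X n →+ RackChain X (n + 1) :=
  FreeAbelianGroup.lift fun x => ∑ y : X, .of (p.insertNth y x)

@[simp]
theorem insertSum_of (p : Fin (n + 1)) (x : Fin n → X) :
    insertSum p (.of x) = ∑ y : X, .of (p.insertNth y x) :=
  FreeAbelianGroup.lift_apply_of _ _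

theorem faceDiff_succ_insertSum (hbij : ∀ b : X, Function.Bijective fun x => op x b)
    {p i : Fin (n + 1)} (h : p ≤ i) (z : Fin (n + 1) → X) :
    faceDiff op i.succ (insertSum p.castSucc (.of z)) = insertSum p (faceDiff op i (.of z)) := by
  let f (y : X) : RackChain X (n + 1) := .of (p.insertNth y (dStar op n i z))
  have reindex : ∑ y : X, f (op y (z i)) = ∑ y : X, f y := (hbij (z i)).sum_comp f
  simp only [insertSum_of, map_sum, faceDiff_of, map_sub, dZero_succ_insertNth h,
    dStar_succ_insertNth op h, Finset.sum_sub_distrib]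
  exact congrArg _ reindex

theorem faceDiff_insertSum_prefixTuple_of_lt {p i : Fin (n + 1)} (h : i < p) {u : X}
    (hu : op u u = u) (k : X) (x : Fin (n + 1) → X) :
    faceDiff op i.castSucc (insertSum p.castSucc (.of (prefixTuple p u k x))) = 0 := by
  rw [insertSum_of, map_sum]
  refine Finset.sum_eq_zero fun y _ => faceDiff_of_eq_zero op fun j hj => ?_
  have hji : j < i := Fin.castSucc_lt_castSucc_iff.1 hj
  rw [insertNth_castSucc_of_lt h, insertNth_castSucc_of_lt (hji.trans h),
    prefixTuple_of_lt h, prefixTuple_of_lt (hji.trans h), hu]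

theorem faceDiff_insertSum_prefixTuple_self (p : Fin (n + 1)) (u k : X) (x : Fin (n + 1) → X) :
    faceDiff op p.castSucc (insertSum p.castSucc (.of (prefixTuple p u k x))) =
      ∑ y : X, (.of (prefixTuple p u k x) - .of (prefixTuple p (op u y) k x)) := by
  have dStar_eq (y : X) : dStar op (n + 1) p.castSucc
      (p.castSucc.insertNth y (prefixTuple p u k x)) = prefixTuple p (op u y) k x := by
    funext j
    rw [dStar_insertNth]
    simp only [prefixTuple, Fin.lt_def, Fin.val_castSucc]
    split_ifs <;> rfl
  simp only [insertSum_of, map_sum, faceDiff_of, dZero_insertNth, dStar_eq]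

theorem rackBoundary_insertSum_prefixTuple (hbij : ∀ b : X, Function.Bijective fun x => op x b)
    (p : Fin (n + 1)) {u : X} (hu : op u u = u) (k : X) (x : Fin (n + 1) → X) :
    rackBoundary op (n + 1) (insertSum p.castSucc (.of (prefixTuple p u k x))) +
        insertSum p (rackBoundary op n (.of (prefixTuple p u k x))) =
      (-1 : ℤ) ^ ((p : ℕ) + 1) •
        ∑ y : X, (.of (prefixTuple p u k x) - .of (prefixTuple p (op u y) k x)) := by
  have cancel (i : Fin (n + 1)) :
      (-1 : ℤ) ^ ((p.castSucc.succAbove i : ℕ) + 1) • faceDiff op (p.castSucc.succAbove i)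
          (insertSum p.castSucc (.of (prefixTuple p u k x))) +
        (-1 : ℤ) ^ ((i : ℕ) + 1) •
          insertSum p (faceDiff op i (.of (prefixTuple p u k x))) = 0 := by
    rcases lt_or_ge i p with h | h
    · have hface : faceDiff op i (.of (prefixTuple p u k x)) = 0 :=
        faceDiff_of_eq_zero op fun j hj => by
          rw [prefixTuple_of_lt h, prefixTuple_of_lt (hj.trans h), hu]
      rw [Fin.succAbove_castSucc_of_lt _ _ h, faceDiff_insertSum_prefixTuple_of_lt h hu, hface,
        map_zero, smul_zero, smul_zero, add_zero]
    · rw [Fin.succAbove_castSucc_of_le _ _ h, faceDiff_succ_insertSum hbij h, Fin.val_succ,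
        pow_succ _ ((i : ℕ) + 1), mul_neg_one, neg_smul, neg_add_cancel]
  simp only [rackBoundary_apply, map_sum, map_zsmul]
  rw [Fin.sum_univ_succAbove _ p.castSucc, add_assoc, ← Finset.sum_add_distrib,
    Finset.sum_eq_zero fun i _ => cancel i, add_zero, faceDiff_insertSum_prefixTuple_self,
    Fin.val_castSucc]

end InsertSum

section Stabilizer

variable {X : Type} [Fintype X] [DecidableEq X] {op : X → X → X} {n : ℕ}

theorem mem_stabF {a k : X} : k ∈ stabF op a ↔ op a k = a := by
  simp [stabF]

theorem sum_stabF_op (hbij : ∀ b : X, Function.Bijective fun x => op x b)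
    (hdist : ∀ a b c : X, op (op a b) c = op (op a c) (op b c)) (a z : X) {M : Type*}
    [AddCommMonoid M] (f : X → M) :
    ∑ k ∈ stabF op (op a z), f k = ∑ k ∈ stabF op a, f (op k z) := by
  refine (Finset.sum_bijective _ (hbij z) (fun k => ?_) fun _ _ => rfl).symm
  rw [mem_stabF, mem_stabF, ← hdist, (hbij z).injective.eq_iff]

theorem stabF_eq_of_mem (hidem : ∀ a : X, op a a = a)
    (htriv : ∀ a x y : X, op a x = a → op a y = a → op x y = x) {a k : X}
    (hk : k ∈ stabF op a) : stabF op k = stabF op a := by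
  rw [mem_stabF] at hk
  have hka : op k a = k := htriv a k a hk (hidem a)
  ext y
  rw [mem_stabF, mem_stabF]
  exact ⟨htriv k a y hka, htriv a k y hk⟩

theorem image_op_compl_stabF {a : X} (ha : op a a = a)
    (hsol : ∀ b : X, op a b ≠ a → ∃ x : X, op a x = b) :
    (stabF op a)ᶜ.image (op a) = (stabF op a)ᶜ := by
  refine (Finset.eq_of_subset_of_card_le (fun b hb => ?_) Finset.card_image_le).symm
  rw [Finset.mem_compl, mem_stabF] at hb
  obtain ⟨x, rfl⟩ := hsol b hb
  refine Finset.mem_image_of_mem _ ?_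
  rw [Finset.mem_compl, mem_stabF]
  intro hx
  rw [hx] at hb
  exact hb ha

theorem sum_op_left {a : X} (ha : op a a = a) (hsol : ∀ b : X, op a b ≠ a → ∃ x : X, op a x = b)
    {M : Type*} [AddCommMonoid M] (f : X → M) :
    ∑ y : X, f (op a y) = (stabF op a).card • f a + ∑ b ∈ (stabF op a)ᶜ, f b := by
  have himage := image_op_compl_stabF ha hsol
  have hinj := Finset.card_image_iff.1 (congrArg Finset.card himage)
  rw [← Finset.sum_add_sum_compl (stabF op a)]
  congr 1
  · exact Finset.sum_eq_card_nsmul fun y hy => by rw [mem_stabF.1 hy]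
  · rw [← Finset.sum_image hinj, himage]

theorem rackBoundary_insertSum_prefixTuple_sub (hidem : ∀ a : X, op a a = a)
    (hbij : ∀ b : X, Function.Bijective fun x => op x b)
    (hsol : ∀ a b : X, op a b ≠ a → ∃ x : X, op a x = b) (p : Fin (n + 1)) {u v : X}
    (huv : stabF op u = stabF op v) (k : X) (x : Fin (n + 1) → X) :
    let d : RackChain X (n + 1) := .of (prefixTuple p u k x) - .of (prefixTuple p v k x)
    rackBoundary op (n + 1) (insertSum p.castSucc d) + insertSum p (rackBoundary op n d) =
      ((-1 : ℤ) ^ ((p : ℕ) + 1) * (Fintype.card X - (stabF op v).card : ℤ)) • d := by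
  intro d
  simp only [d, map_sub]
  rw [sub_add_sub_comm, rackBoundary_insertSum_prefixTuple hbij p (hidem u),
    rackBoundary_insertSum_prefixTuple hbij p (hidem v), mul_smul, ← smul_sub]
  congr 1
  simp only [Finset.sum_sub_distrib,
    sum_op_left (hidem _) (hsol _) fun w => FreeAbelianGroup.of (prefixTuple p w k x),
    Finset.sum_const, Finset.card_univ, huv, sub_smul, smul_sub, natCast_zsmul]
  abel

/-- A common form of `g_0^j` and `g_2^j`, with `j = p + 1`: the sum over `k ∈ S_{x_p}` of the
tuples `(u, …, u, k, x_{p+1}, …)` whose `p` leading entries are `u = s x_p k`. It is `g_0^j` when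
`s` is the first projection and `g_2^j` when `s` is the second; it too is zero if `n < j`. -/
def stabSum (op s : X → X → X) (n p : ℕ) : RackChain X n →+ RackChain X n :=
  FreeAbelianGroup.lift fun x =>
    if h : p < n then
      ∑ k ∈ stabF op (x ⟨p, h⟩), .of (prefixTuple p (s (x ⟨p, h⟩) k) k x)
    else 0

theorem stabSum_of {s : X → X → X} {p : ℕ} (h : p < n) (x : Fin n → X) :
    stabSum op s n p (.of x) =
      ∑ k ∈ stabF op (x ⟨p, h⟩), .of (prefixTuple p (s (x ⟨p, h⟩) k) k x) := by
  rw [stabSum, FreeAbelianGroup.lift_apply_of, dif_pos h]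

theorem stabSum_eq_zero {s : X → X → X} {p : ℕ} (h : n ≤ p) : stabSum op s n p = 0 := by
  ext x
  rw [stabSum, FreeAbelianGroup.lift_apply_of, dif_neg h.not_gt, AddMonoidHom.zero_apply]

theorem stabSum_of_congr {s : X → X → X} {p : ℕ} {x x' : Fin n → X}
    (h : ∀ i : Fin n, p ≤ i → x i = x' i) :
    stabSum op s n p (.of x) = stabSum op s n p (.of x') := by
  rcases lt_or_ge p n with hp | hp
  · simp only [stabSum_of hp, h ⟨p, hp⟩ le_rfl, prefixTuple_congr h]
  · rw [stabSum_eq_zero hp, AddMonoidHom.zero_apply, AddMonoidHom.zero_apply]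

theorem faceDiff_stabSum (hidem : ∀ a : X, op a a = a)
    (hbij : ∀ b : X, Function.Bijective fun x => op x b)
    (hdist : ∀ a b c : X, op (op a b) c = op (op a c) (op b c)) {s : X → X → X}
    (hs : ∀ a k : X, op a k = a → op (s a k) k = s a k)
    (hsop : ∀ a k z : X, s (op a z) (op k z) = op (s a k) z) {p : ℕ} (hp : p < n + 1)
    (i : Fin (n + 1)) (x : Fin (n + 1) → X) :
    faceDiff op i (stabSum op s (n + 1) p (.of x)) =
      stabSum op s n p (faceDiff op i (.of x)) := by
  rw [stabSum_of hp, map_sum]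
  rcases le_or_gt (i : ℕ) p with hi | hi
  · have hfaces : stabSum op s n p (.of (dZero n i x)) = stabSum op s n p (.of (dStar op n i x)) :=
      stabSum_of_congr fun l hl => by simp [dZero, dStar, (hi.trans hl).not_gt]
    rw [faceDiff_of, map_sub, hfaces, sub_self]
    exact Finset.sum_eq_zero fun k hk =>
      faceDiff_prefixTuple_eq_zero hi (hidem _) (hs _ _ (mem_stabF.1 hk)) x
  · have hpn : p < n := by omega
    have hzero : dZero n i x ⟨p, hpn⟩ = x ⟨p, hp⟩ := if_pos hi
    have hstar : dStar op n i x ⟨p, hpn⟩ = op (x ⟨p, hp⟩) (x i) := if_pos hi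
    simp only [faceDiff_of, map_sub, stabSum_of hpn, hzero, hstar, sum_stabF_op hbij hdist, hsop,
      dZero_prefixTuple hi, dStar_prefixTuple op hi, Finset.sum_sub_distrib]

theorem rackBoundary_stabSum (hidem : ∀ a : X, op a a = a)
    (hbij : ∀ b : X, Function.Bijective fun x => op x b)
    (hdist : ∀ a b c : X, op (op a b) c = op (op a c) (op b c)) {s : X → X → X}
    (hs : ∀ a k : X, op a k = a → op (s a k) k = s a k)
    (hsop : ∀ a k z : X, s (op a z) (op k z) = op (s a k) z) {p : ℕ} (hp : p < n + 1)
    (c : RackChain X (n + 1)) :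
    rackBoundary op n (stabSum op s (n + 1) p c) = stabSum op s n p (rackBoundary op n c) := by
  suffices h : (rackBoundary op n).comp (stabSum op s (n + 1) p) =
      (stabSum op s n p).comp (rackBoundary op n) from DFunLike.congr_fun h c
  ext x
  simp only [AddMonoidHom.comp_apply, rackBoundary_apply, map_sum, map_zsmul,
    faceDiff_stabSum hidem hbij hdist hs hsop hp]

theorem g0map_eq_stabSum (p : ℕ) : g0map op n (p + 1) = stabSum op (fun a _ => a) n p := by
  ext x
  rw [g0map, stabSum, FreeAbelianGroup.lift_apply_of, FreeAbelianGroup.lift_apply_of]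
  by_cases h : p < n
  · rw [dif_pos h, dif_pos (by omega)]
    rfl
  · rw [dif_neg h, dif_neg (by omega)]

theorem g2map_eq_stabSum (p : ℕ) : g2map op n (p + 1) = stabSum op (fun _ k => k) n p := by
  ext x
  rw [g2map, stabSum, FreeAbelianGroup.lift_apply_of, FreeAbelianGroup.lift_apply_of]
  by_cases h : p < n
  · rw [dif_pos h, dif_pos (by omega)]
    refine Finset.sum_congr rfl fun k _ => congrArg _ (funext fun i => ?_)
    grind [prefixTuple]
  · rw [dif_neg h, dif_neg (by omega)]

theorem g0map_sub_g2map_of (p : Fin n) (x : Fin n → X) :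
    g0map op n (p + 1) (.of x) - g2map op n (p + 1) (.of x) = ∑ k ∈ stabF op (x p),
      (.of (prefixTuple p (x p) k x) - .of (prefixTuple p k k x)) := by
  simp only [g0map_eq_stabSum, g2map_eq_stabSum, stabSum_of p.isLt, Finset.sum_sub_distrib]

theorem rackBoundary_g0map_sub_g2map (hidem : ∀ a : X, op a a = a)
    (hbij : ∀ b : X, Function.Bijective fun x => op x b)
    (hdist : ∀ a b c : X, op (op a b) c = op (op a c) (op b c)) {p : ℕ} (hp : p < n + 1)
    (c : RackChain X (n + 1)) :
    rackBoundary op n (g0map op (n + 1) (p + 1) c - g2map op (n + 1) (p + 1) c) =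
      g0map op n (p + 1) (rackBoundary op n c) - g2map op n (p + 1) (rackBoundary op n c) := by
  simp only [g0map_eq_stabSum, g2map_eq_stabSum, map_sub]
  rw [rackBoundary_stabSum hidem hbij hdist (fun _ _ h => h) (fun _ _ _ => rfl) hp,
    rackBoundary_stabSum hidem hbij hdist (fun _ _ _ => hidem _) (fun _ _ _ => rfl) hp]

theorem Fmap_apply {p : ℕ} (hp : 1 ≤ p) (hpn : p < n + 1) (c : RackChain X n) :
    Fmap op n (p + 1) c = insertSum ⟨p, hpn⟩ (g0map op n (p + 1) c - g2map op n (p + 1) c) := by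
  suffices h : Fmap op n (p + 1) =
      (insertSum ⟨p, hpn⟩).comp (g0map op n (p + 1) - g2map op n (p + 1)) from
    DFunLike.congr_fun h c
  ext x
  rw [AddMonoidHom.comp_apply, AddMonoidHom.sub_apply, Fmap, FreeAbelianGroup.lift_apply_of]
  rcases lt_or_ge p n with h | h
  · have hp_cast : (⟨p, hpn⟩ : Fin (n + 1)) = (⟨p, h⟩ : Fin n).castSucc := rfl
    rw [dif_pos (by omega), g0map_sub_g2map_of ⟨p, h⟩]
    simp only [hp_cast, map_sum, map_sub, insertSum_of, insertNth_prefixTuple ⟨p, h⟩,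
      ← Finset.sum_sub_distrib]
    rfl
  · rw [dif_neg (by omega), g0map_eq_stabSum, g2map_eq_stabSum, stabSum_eq_zero h,
      stabSum_eq_zero h, sub_self, map_zero]

theorem rackBoundary_insertSum_g0map_sub_g2map (hidem : ∀ a : X, op a a = a)
    (hbij : ∀ b : X, Function.Bijective fun x => op x b)
    (hsol : ∀ a b : X, op a b ≠ a → ∃ x : X, op a x = b)
    (htriv : ∀ a x y : X, op a x = a → op a y = a → op x y = x) {m : ℕ}
    (hstab : ∀ a : X, (stabF op a).card = m) (p : Fin (n + 1)) (c : RackChain X (n + 1)) :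
    let d := g0map op (n + 1) (p + 1) c - g2map op (n + 1) (p + 1) c
    rackBoundary op (n + 1) (insertSum p.castSucc d) + insertSum p (rackBoundary op n d) =
      ((-1 : ℤ) ^ ((p : ℕ) + 1) * (Fintype.card X - m : ℤ)) • d := by
  let D := g0map op (n + 1) (p + 1) - g2map op (n + 1) (p + 1)
  suffices h : ((rackBoundary op (n + 1)).comp (insertSum p.castSucc) +
      (insertSum p).comp (rackBoundary op n)).comp D =
        ((-1 : ℤ) ^ ((p : ℕ) + 1) * (Fintype.card X - m : ℤ)) • D from DFunLike.congr_fun h c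
  ext x
  rw [AddMonoidHom.comp_apply, AddMonoidHom.smul_apply, AddMonoidHom.sub_apply,
    g0map_sub_g2map_of, map_sum, Finset.smul_sum]
  refine Finset.sum_congr rfl fun k hk => ?_
  rw [← hstab k]
  exact rackBoundary_insertSum_prefixTuple_sub hidem hbij hsol p
    (stabF_eq_of_mem hidem htriv hk).symm k x

end Stabilizer

end RackChain

/-- For a finite `m`-almost quasigroup quandle `X` with all
stabilizers trivial subquandles,
`∂_{n+1}∘F_n^j + F_{n-1}^j∘∂_n = (−1)^j(|X|−m)(g_0^j − g_2^j)`
as maps `C_n^R(X) → C_n^R(X)` (for `2 ≤ j ≤ n`). -/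
theorem mAQ_Fmap_homotopy
    {X : Type} [Fintype X] [DecidableEq X] (op : X → X → X) (m : ℕ)
    (hm : 1 ≤ m)
    (hidem : ∀ a : X, op a a = a)
    (hbij : ∀ b : X, Function.Bijective fun x => op x b)
    (hdist : ∀ a b c : X, op (op a b) c = op (op a c) (op b c))
    (hstab : ∀ a : X, (stabF op a).card = m)
    (hsol : ∀ a b : X, op a b ≠ a → ∃! x : X, op a x = b)
    (htriv : ∀ a x y : X, op a x = a → op a y = a → op x y = x) :
    ∀ (n j : ℕ), 2 ≤ j → j ≤ n + 1 →
      ∀ c : RackChain X (n + 1),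
        rackBoundary op (n + 1) (Fmap op (n + 1) j c)
            + Fmap op n j (rackBoundary op n c)
          = ((-1 : ℤ) ^ j * ((Fintype.card X : ℤ) - (m : ℤ))) •
              (g0map op (n + 1) j c - g2map op (n + 1) j c) := by
  intro n j hj hjn c
  obtain ⟨p, rfl⟩ : ∃ p : Fin (n + 1), j = p + 1 :=
    ⟨⟨j - 1, by omega⟩, (Nat.sub_add_cancel (by omega)).symm⟩
  have hp : 1 ≤ (p : ℕ) := by omega
  rw [RackChain.Fmap_apply hp p.castSucc.isLt, RackChain.Fmap_apply hp p.isLt,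
    ← RackChain.rackBoundary_g0map_sub_g2map hidem hbij hdist p.isLt]
  exact RackChain.rackBoundary_insertSum_g0map_sub_g2map hidem hbij
    (fun a b hab => (hsol a b hab).exists) htriv hstab p c
end
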